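/- For the codifferential d = φ^{(1,1)}_m (i.e. ψ^{e_1e_1}_{f_s}) on an r|s-dimensional graded space with r, s ≥ 1, the cohomology dimensions are h^n = (r+s−1)^{n+1} if n ≡ 0 or 1 (mod 4), and h^n = (r+s−1)^{n+1} + 1 if n ≡ 2 or 3 (mod 4), for all n ≥ 0. -/

import Mathlib

open Finsupp Submodule LinearMap

set_option maxSynthPendingDepth 2

namespace NilpotentCohomology

/-- The big space of cochains of all degrees: formal ℂ-linear combinations of
basis symbols `φ^I_x` indexed by a multi-index `I : List (Fin m)` and an output
index `x : Fin m`. -/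
abbrev Cochain (m : ℕ) : Type := (List (Fin m) × Fin m) →₀ ℂ

/-- Parity of an index: `0` if the index is among the first `r` (even) ones, `1` otherwise. -/
def par (r : ℕ) {m : ℕ} (i : Fin m) : ℕ := if (i : ℕ) < r then 0 else 1

/-- Parity of a multi-index: the sum of the parities of its entries. -/
def lpar (r : ℕ) {m : ℕ} (I : List (Fin m)) : ℕ := (I.map (par r)).sum

/-- Parity of a basis cochain `φ^I_x`: `|I| + |x|`. -/
def ppar (r : ℕ) {m : ℕ} (p : List (Fin m) × Fin m) : ℕ := lpar r p.1 + par r p.2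

/-- `(I, J, k)`: the multi-index `I` with its `k`-th entry (0-indexed) replaced by the string `J`. -/
def insertAt {m : ℕ} (I J : List (Fin m)) (k : ℕ) : List (Fin m) :=
  I.take k ++ J ++ I.drop (k + 1)

/-- The insertion product of two basis cochains `φ^I_x ∘ φ^J_y`. -/
noncomputable def basisComp (r : ℕ) {m : ℕ} (p q : List (Fin m) × Fin m) : Cochain m :=
  ∑ k : Fin p.1.length,
    if p.1.get k = q.2 then
      ((-1 : ℂ) ^ (lpar r (p.1.take ((k : ℕ) + 1)) * ppar r q)) •
        Finsupp.single (insertAt p.1 q.1 (k : ℕ), p.2) (1 : ℂ)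
    else 0

/-- The insertion product, extended bilinearly. -/
noncomputable def comp (r : ℕ) {m : ℕ} :
    Cochain m →ₗ[ℂ] Cochain m →ₗ[ℂ] Cochain m :=
  Finsupp.lsum ℂ fun p => LinearMap.toSpanSingleton ℂ _
    (Finsupp.lsum ℂ fun q => LinearMap.toSpanSingleton ℂ (Cochain m) (basisComp r p q))

/-- The bracket `[φ, ψ] = φ∘ψ − (−1)^{|φ||ψ|} ψ∘φ` of two parity-homogeneous cochains
of parities `pf` and `pg`. -/
noncomputable def bracket (r : ℕ) {m : ℕ} (pf pg : ℕ) (f g : Cochain m) : Cochain m :=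
  comp r f g - ((-1 : ℂ) ^ (pf * pg)) • comp r g f

/-- The quadratic cochain `φ^{(a,a)}_b`. -/
noncomputable def dd {m : ℕ} (a b : Fin m) : Cochain m :=
  Finsupp.single ([a, a], b) (1 : ℂ)

/-- The linear map multiplying each basis cochain by `(−1)^{its parity}`. -/
noncomputable def twist (r : ℕ) {m : ℕ} : Cochain m →ₗ[ℂ] Cochain m :=
  Finsupp.lsum ℂ fun p => LinearMap.toSpanSingleton ℂ (Cochain m)
    (((-1 : ℂ) ^ (ppar r p)) • Finsupp.single p (1 : ℂ))

/-- The coboundary operator `D(φ) = [d, φ] = d∘φ − (−1)^{|d||φ|} φ∘d` for the odd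
codifferential `d = φ^{(a,a)}_b`, extended linearly from parity-homogeneous `φ`. -/
noncomputable def Dop (r : ℕ) {m : ℕ} (a b : Fin m) : Cochain m →ₗ[ℂ] Cochain m :=
  comp r (dd a b) - ((comp r).flip (dd a b)) ∘ₗ twist r

/-- `C^n`: the span of the basis cochains `φ^I_x` with `I` of length `n`. -/
noncomputable def Cn (m n : ℕ) : Submodule ℂ (Cochain m) :=
  Submodule.span ℂ
    {f | ∃ I : List (Fin m), I.length = n ∧ ∃ x : Fin m, f = Finsupp.single (I, x) 1}

/-- `C^n_x`: the span of the basis cochains `φ^I_x` with `I` of length `n` and output `x`. -/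
noncomputable def Cnx (m : ℕ) (n : ℕ) (x : Fin m) : Submodule ℂ (Cochain m) :=
  Submodule.span ℂ
    {f | ∃ I : List (Fin m), I.length = n ∧ f = Finsupp.single (I, x) 1}

/-- The projection onto the cochains with output index `x`. -/
noncomputable def projOut {m : ℕ} (x : Fin m) : Cochain m →ₗ[ℂ] Cochain m :=
  Finsupp.lsum ℂ fun p => LinearMap.toSpanSingleton ℂ (Cochain m)
    (if p.2 = x then Finsupp.single p (1 : ℂ) else 0)

/-- `λ^J (φ^I_x) = φ^{JI}_x`, extended linearly. -/
noncomputable def lam {m : ℕ} (J : List (Fin m)) : Cochain m →ₗ[ℂ] Cochain m :=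
  Finsupp.lsum ℂ fun p => LinearMap.toSpanSingleton ℂ (Cochain m)
    (Finsupp.single (J ++ p.1, p.2) (1 : ℂ))

/-- `ρ^J (φ^I_x) = (−1)^{|I||J|} φ^{IJ}_x`, extended linearly. -/
noncomputable def rho (r : ℕ) {m : ℕ} (J : List (Fin m)) : Cochain m →ₗ[ℂ] Cochain m :=
  Finsupp.lsum ℂ fun p => LinearMap.toSpanSingleton ℂ (Cochain m)
    (((-1 : ℂ) ^ (lpar r p.1 * lpar r J)) • Finsupp.single (p.1 ++ J, p.2) (1 : ℂ))

/-- `θ = λ^{(a,b)} − λ^{(b,a)}`. -/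
noncomputable def theta {m : ℕ} (a b : Fin m) : Cochain m →ₗ[ℂ] Cochain m :=
  lam [a, b] - lam [b, a]

/-- `τ`: swaps the outputs `a` and `b` of basis cochains (identity on other outputs). -/
noncomputable def tau {m : ℕ} (a b : Fin m) : Cochain m →ₗ[ℂ] Cochain m :=
  Finsupp.lsum ℂ fun p => LinearMap.toSpanSingleton ℂ (Cochain m)
    (Finsupp.single (p.1, if p.2 = a then b else if p.2 = b then a else p.2) (1 : ℂ))

/-! ### Full cohomology -/

/-- Cocycles of degree `n` of the full complex. -/
noncomputable def Zfull (r : ℕ) {m : ℕ} (a b : Fin m) (n : ℕ) : Submodule ℂ (Cochain m) :=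
  Cn m n ⊓ LinearMap.ker (Dop r a b)

/-- Coboundaries of degree `n` of the full complex (`C^{-1} = 0`). -/
noncomputable def Bfull (r : ℕ) {m : ℕ} (a b : Fin m) : ℕ → Submodule ℂ (Cochain m)
  | 0 => ⊥
  | n + 1 => Submodule.map (Dop r a b) (Cn m n)

/-- The full cohomology `H^n = Z^n / B^n`. -/
noncomputable abbrev Hfull (r : ℕ) {m : ℕ} (a b : Fin m) (n : ℕ) : Type :=
  Zfull r a b n ⧸ (Bfull r a b n).comap (Zfull r a b n).subtype

/-! ### The restricted complexes -/

/-- The restricted differential `D_x`: the `e₁`-output component of `D` when `x = a`,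
and `D` itself (which preserves output `x`) otherwise. -/
noncomputable def Dx (r : ℕ) {m : ℕ} (a b x : Fin m) : Cochain m →ₗ[ℂ] Cochain m :=
  if x = a then projOut a ∘ₗ Dop r a b else Dop r a b

/-- Cocycles of the restricted complex `(C^•_x, D_x)`. -/
noncomputable def Zx (r : ℕ) {m : ℕ} (a b x : Fin m) (n : ℕ) : Submodule ℂ (Cochain m) :=
  Cnx m n x ⊓ LinearMap.ker (Dx r a b x)

/-- Coboundaries of the restricted complex `(C^•_x, D_x)` (`C^{-1}_x = 0`). -/
noncomputable def Bx (r : ℕ) {m : ℕ} (a b x : Fin m) : ℕ → Submodule ℂ (Cochain m)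
  | 0 => ⊥
  | n + 1 => Submodule.map (Dx r a b x) (Cnx m n x)

/-- Cohomology `H^n_x` of the restricted complex `(C^•_x, D_x)`. -/
noncomputable abbrev Hx (r : ℕ) {m : ℕ} (a b x : Fin m) (n : ℕ) : Type :=
  Zx r a b x n ⧸ (Bx r a b x n).comap (Zx r a b x n).subtype

/-! ### The subcomplex `C^•_a ⊕ C^•_b` and the `b`-output complex -/

/-- `C^n_a ⊕ C^n_b` (internal direct sum). -/
noncomputable def Cpair (m : ℕ) (a b : Fin m) (n : ℕ) : Submodule ℂ (Cochain m) :=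
  Cnx m n a ⊔ Cnx m n b

noncomputable def Zpair (r : ℕ) {m : ℕ} (a b : Fin m) (n : ℕ) : Submodule ℂ (Cochain m) :=
  Cpair m a b n ⊓ LinearMap.ker (Dop r a b)

noncomputable def Bpair (r : ℕ) {m : ℕ} (a b : Fin m) : ℕ → Submodule ℂ (Cochain m)
  | 0 => ⊥
  | n + 1 => Submodule.map (Dop r a b) (Cpair m a b n)

/-- `H^n`: the cohomology of the subcomplex `(C^•_a ⊕ C^•_b, D)`. -/
noncomputable abbrev Hpair (r : ℕ) {m : ℕ} (a b : Fin m) (n : ℕ) : Type :=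
  Zpair r a b n ⧸ (Bpair r a b n).comap (Zpair r a b n).subtype

/-- Cocycles of `(C^•_b, D_b)`, where `D_b` is the restriction of `D`. -/
noncomputable def Zm (r : ℕ) {m : ℕ} (a b : Fin m) (n : ℕ) : Submodule ℂ (Cochain m) :=
  Cnx m n b ⊓ LinearMap.ker (Dop r a b)

noncomputable def Bm (r : ℕ) {m : ℕ} (a b : Fin m) : ℕ → Submodule ℂ (Cochain m)
  | 0 => ⊥
  | n + 1 => Submodule.map (Dop r a b) (Cnx m n b)

/-- `H^n_b`: the cohomology of `(C^•_b, D_b)`. -/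
noncomputable abbrev Hm (r : ℕ) {m : ℕ} (a b : Fin m) (n : ℕ) : Type :=
  Zm r a b n ⧸ (Bm r a b n).comap (Zm r a b n).subtype

lemma Zm_le_Zpair (r : ℕ) {m : ℕ} (a b : Fin m) (n : ℕ) :
    Zm r a b n ≤ Zpair r a b n :=
  inf_le_inf le_sup_right le_rfl

lemma Bm_le_Bpair (r : ℕ) {m : ℕ} (a b : Fin m) : ∀ n : ℕ, Bm r a b n ≤ Bpair r a b n
  | 0 => bot_le
  | _ + 1 => Submodule.map_mono le_sup_right

/-- The natural map `H^n_b → H^n` induced by the inclusion of cocycles. -/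
noncomputable def iotaHm (r : ℕ) {m : ℕ} (a b : Fin m) (n : ℕ) :
    Hm r a b n →ₗ[ℂ] Hpair r a b n :=
  Submodule.mapQ _ _ (Submodule.inclusion (Zm_le_Zpair r a b n))
    (fun z hz => Bm_le_Bpair r a b n hz)

/-- `Ĥ^n_f`: the image of `H^n_b` in `H^n`. -/
noncomputable def Hfhat (r : ℕ) {m : ℕ} (a b : Fin m) (n : ℕ) : Submodule ℂ (Hpair r a b n) :=
  LinearMap.range (iotaHm r a b n)

/-- `Ĥ^n_e = H^n / Ĥ^n_f`. -/
noncomputable abbrev Hehat (r : ℕ) {m : ℕ} (a b : Fin m) (n : ℕ) : Type :=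
  Hpair r a b n ⧸ Hfhat r a b n

/-! ### The spaces `Ĉ^n_x` of nontrivial cocycles -/

/-- The recursively defined subspaces `Ĉ^n_x` of nontrivial cocycles. -/
noncomputable def Chat (r : ℕ) {m : ℕ} (a b x : Fin m) : ℕ → Submodule ℂ (Cochain m)
  | 0 => Submodule.span ℂ {Finsupp.single (([] : List (Fin m)), x) 1}
  | 1 => Submodule.span ℂ
      ({Finsupp.single ([a], x) 1} ∪
        ⋃ c ∈ {c : Fin m | c ≠ a ∧ c ≠ b}, lam [c] '' (Chat r a b x 0 : Set (Cochain m)))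
  | n + 2 => Submodule.span ℂ
      ((⋃ c ∈ {c : Fin m | c ≠ a ∧ c ≠ b},
          lam [c] '' (Chat r a b x (n + 1) : Set (Cochain m))) ∪
        (theta a b '' (Chat r a b x n : Set (Cochain m))) ∪
        ⋃ c ∈ {c : Fin m | c ≠ a ∧ c ≠ b},
          (lam [a] + rho r [a]) '' (lam [c] '' (Chat r a b x n : Set (Cochain m))))


section Aux

abbrev TT (m : ℕ) : Type := List (Fin m) → ℂ

noncomputable def sgn (r : ℕ) {m : ℕ} (I : List (Fin m)) : ℂ := (-1) ^ lpar r I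

def cmp {m : ℕ} (c : Fin m) : TT m →ₗ[ℂ] TT m where
  toFun f I := f (c :: I)
  map_add' _ _ := rfl
  map_smul' _ _ := rfl

def consF {m : ℕ} (c : Fin m) (f : TT m) : TT m
  | [] => 0
  | d :: I => if d = c then f I else 0

def cns {m : ℕ} (c : Fin m) : TT m →ₗ[ℂ] TT m where
  toFun f := consF c f
  map_add' f g := by
    funext I; cases I <;> simp [consF]
    split_ifs <;> simp
  map_smul' t f := by
    funext I; cases I <;> simp [consF]

noncomputable def EE (r : ℕ) {m : ℕ} : TT m →ₗ[ℂ] TT m where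
  toFun f I := sgn r I * f I
  map_add' f g := by funext I; simp [mul_add]
  map_smul' t f := by funext I; simp; ring

noncomputable def delF (r : ℕ) {m : ℕ} (a b : Fin m) : List (Fin m) → TT m → ℂ
  | [], _ => 0
  | c :: I, f => delF r a b I (cmp c f) + if c = a then cns a (EE r (cmp b f)) I else 0

noncomputable def del (r : ℕ) {m : ℕ} (a b : Fin m) : TT m →ₗ[ℂ] TT m where
  toFun f I := delF r a b I f
  map_add' f g := by
    funext I
    simp only [Pi.add_apply]
    induction I generalizing f g with
    | nil => simp [delF]
    | cons c I ih =>
      simp only [delF, map_add, ih, Pi.add_apply]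
      split_ifs <;> ring
  map_smul' t f := by
    funext I
    simp only [Pi.smul_apply, RingHom.id_apply, smul_eq_mul]
    induction I generalizing f with
    | nil => simp [delF]
    | cons c I ih =>
      simp only [delF, map_smul, ih, Pi.smul_apply, smul_eq_mul]
      split_ifs <;> ring

noncomputable def one {m : ℕ} : TT m := Pi.single [] 1

noncomputable def rmF {m : ℕ} (d : Fin m) : List (Fin m) → TT m → ℂ
  | [], _ => 0
  | c :: I, f => rmF d I (cmp c f) + if c = d then f [] * one I else 0

noncomputable def rm {m : ℕ} (d : Fin m) : TT m →ₗ[ℂ] TT m where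
  toFun f I := rmF d I f
  map_add' f g := by
    funext I
    simp only [Pi.add_apply]
    induction I generalizing f g with
    | nil => simp [rmF]
    | cons c I ih =>
      simp only [rmF, map_add, ih, Pi.add_apply]
      split_ifs <;> ring
  map_smul' t f := by
    funext I
    simp only [Pi.smul_apply, RingHom.id_apply, smul_eq_mul]
    induction I generalizing f with
    | nil => simp [rmF]
    | cons c I ih =>
      simp only [rmF, map_smul, ih, Pi.smul_apply, smul_eq_mul]
      split_ifs <;> ring

variable {r m : ℕ} {a b : Fin m}

lemma tt_ext {f g : TT m} (h0 : f [] = g []) (h : ∀ c, cmp c f = cmp c g) : f = g := by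
  funext I
  cases I with
  | nil => exact h0
  | cons c I => exact congrFun (h c) I

lemma ap_eq {f g : TT m} {c I} (h : cmp c f I = cmp c g I) : f (c :: I) = g (c :: I) := h
lemma ap_zero {f : TT m} {c I} (h : cmp c f I = 0) : f (c :: I) = 0 := h

lemma cmp_app (c : Fin m) (f : TT m) (I) : cmp c f I = f (c :: I) := rfl

@[simp] lemma del_nil (f : TT m) : del r a b f [] = 0 := rfl
@[simp] lemma cns_nil (c : Fin m) (f : TT m) : cns c f [] = 0 := rfl
@[simp] lemma rm_nil (c : Fin m) (f : TT m) : rm c f [] = 0 := rfl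
@[simp] lemma one_nil : (one : TT m) [] = 1 := by simp [one]
@[simp] lemma EE_nil (f : TT m) : EE r f [] = f [] := by simp [EE, sgn, lpar]
@[simp] lemma cmp_one (c : Fin m) : cmp c (one : TT m) = 0 := by
  funext I; simp [cmp_app, one]

lemma cmp_del (c : Fin m) (f : TT m) : cmp c (del r a b f) =
    del r a b (cmp c f) + if c = a then cns a (EE r (cmp b f)) else 0 := by
  funext I
  simp only [cmp_app, del, LinearMap.coe_mk, AddHom.coe_mk, delF, Pi.add_apply]
  split_ifs <;> rfl

@[simp] lemma cmp_cns (c d : Fin m) (f : TT m) : cmp c (cns d f) = if c = d then f else 0 := by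
  funext I
  simp only [cmp_app, cns, LinearMap.coe_mk, AddHom.coe_mk, consF]
  split_ifs <;> rfl

lemma cmp_rm (c d : Fin m) (f : TT m) : cmp c (rm d f) =
    rm d (cmp c f) + if c = d then f [] • (one : TT m) else 0 := by
  funext I
  simp only [cmp_app, rm, LinearMap.coe_mk, AddHom.coe_mk, rmF, Pi.add_apply]
  split_ifs <;> rfl

lemma sgn_cons (c : Fin m) (I : List (Fin m)) : sgn r (c :: I) = (-1) ^ par r c * sgn r I := by
  simp [sgn, lpar, pow_add]

lemma sgn_sq (I : List (Fin m)) : sgn r I * sgn r I = 1 := by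
  simp [sgn, ← mul_pow]

lemma cmp_EE (c : Fin m) (f : TT m) : cmp c (EE r f) = ((-1 : ℂ) ^ par r c) • EE r (cmp c f) := by
  funext I
  simp only [cmp_app, EE, LinearMap.coe_mk, AddHom.coe_mk, sgn_cons, Pi.smul_apply, smul_eq_mul]
  ring

@[simp] lemma EE_EE (f : TT m) : EE r (EE r f) = f := by
  funext I
  simp only [EE, LinearMap.coe_mk, AddHom.coe_mk]
  rw [← mul_assoc, sgn_sq, one_mul]

@[simp] lemma EE_one : EE r (one : TT m) = one := by
  apply tt_ext <;> simp [cmp_EE]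

lemma EE_cns (c : Fin m) (f : TT m) : EE r (cns c f) = ((-1 : ℂ) ^ par r c) • cns c (EE r f) := by
  apply tt_ext
  · simp
  · intro d
    simp only [cmp_EE, cmp_cns, map_smul]
    split_ifs with h <;> simp [h]

lemma del_cns (c : Fin m) (hab : a ≠ b) (f : TT m) : del r a b (cns c f) =
    cns c (del r a b f) + if c = b then cns a (cns a (EE r f)) else 0 := by
  apply tt_ext
  · split_ifs <;> simp
  · intro d
    simp only [cmp_del, cmp_cns, map_add]
    by_cases h1 : d = c <;> by_cases h2 : d = a <;> by_cases h3 : c = b <;> simp_all [eq_comm]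

@[simp] lemma del_one : del r a b (one : TT m) = 0 := by
  apply tt_ext
  · simp
  · intro d
    simp [cmp_del]

lemma rm_one (d : Fin m) : rm d (one : TT m) = cns d one := by
  apply tt_ext
  · simp
  · intro c
    simp [cmp_rm]

lemma rm_cns (c d : Fin m) (f : TT m) : rm d (cns c f) = cns c (rm d f) := by
  apply tt_ext
  · simp
  · intro e
    simp only [cmp_rm, cmp_cns, cns_nil, zero_smul, ite_self, add_zero]
    split_ifs <;> simp

lemma EE_rm (d : Fin m) (f : TT m) : EE r (rm d f) = ((-1 : ℂ) ^ par r d) • rm d (EE r f) := by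
  funext I
  induction I generalizing f with
  | nil => simp
  | cons c I ih =>
    have := ih (cmp c f)
    refine ap_eq ?_
    rw [cmp_EE, cmp_rm, map_smul, cmp_rm, cmp_EE]
    simp only [map_add, map_smul, Pi.smul_apply, Pi.add_apply, this]
    by_cases h : c = d
    · simp [h]
    · simp [h]; ring

lemma EE_del (ha : par r a = 0) (hb : par r b = 1) (f : TT m) :
    EE r (del r a b f) = - del r a b (EE r f) := by
  funext I
  induction I generalizing f with
  | nil => simp
  | cons c I ih =>
    have := ih (cmp c f)
    refine ap_eq ?_
    rw [cmp_EE, cmp_del, map_neg, cmp_del, cmp_EE, cmp_EE]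
    simp only [map_add, map_smul, Pi.smul_apply, Pi.add_apply, Pi.neg_apply, this]
    by_cases h : c = a
    · simp [h, ha, hb, EE_cns]; ring
    · simp [h]

lemma del_del (hab : a ≠ b) (ha : par r a = 0) (hb : par r b = 1) (f : TT m) :
    del r a b (del r a b f) = 0 := by
  funext I
  induction I generalizing f with
  | nil => simp
  | cons c I ih =>
    have := ih (cmp c f)
    refine ap_zero ?_
    rw [cmp_del, cmp_del, cmp_del, map_add, Pi.add_apply, Pi.add_apply, this]
    by_cases h : c = a
    · simp [h, hab.symm, del_cns, hab, EE_del ha hb]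
    · simp [h]

lemma del_rm (hab : a ≠ b) (ha : par r a = 0) (f : TT m) :
    del r a b (rm a f) = rm a (del r a b f) := by
  funext I
  induction I generalizing f with
  | nil => simp
  | cons c I ih =>
    have := ih (cmp c f)
    refine ap_eq ?_
    rw [cmp_del, cmp_rm, cmp_rm, cmp_rm, cmp_del]
    simp only [map_add, Pi.add_apply, this]
    by_cases h : c = a
    · simp [h, hab.symm, EE_rm, ha, rm_cns]
    · simp [h]

lemma del_rmb (hab : a ≠ b) (hb : par r b = 1) (f : TT m) :
    del r a b (rm b f) = rm a (rm a f) - rm b (del r a b f) := by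
  funext I
  induction I generalizing f with
  | nil => simp
  | cons c I ih =>
    have := ih (cmp c f)
    refine ap_eq ?_
    rw [cmp_del, cmp_rm, map_sub, cmp_rm, cmp_rm, cmp_rm, cmp_rm, cmp_del]
    simp only [map_add, Pi.add_apply, Pi.sub_apply, this]
    by_cases h : c = a
    · simp [h, hab, EE_rm, hb, rm_cns, rm_one]; ring
    · by_cases h2 : c = b <;> simp [h, h2, hab.symm]

noncomputable def Th (a b : Fin m) : TT m →ₗ[ℂ] TT m := cns a ∘ₗ cns b - cns b ∘ₗ cns a

lemma Th_app (f : TT m) : Th a b f = cns a (cns b f) - cns b (cns a f) := rfl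

lemma del_Th (hab : a ≠ b) (ha : par r a = 0) (f : TT m) :
    del r a b (Th a b f) = Th a b (del r a b f) := by
  simp [Th_app, del_cns, hab, EE_cns, ha]

lemma rm_Th (d : Fin m) (f : TT m) : rm d (Th a b f) = Th a b (rm d f) := by
  simp [Th_app, rm_cns]

/-- graded pieces (index is length + 1) -/
def GG (m n : ℕ) : Submodule ℂ (TT m) where
  carrier := {f | ∀ I, I.length + 1 ≠ n → f I = 0}
  add_mem' hf hg I h := by simp [hf I h, hg I h]
  zero_mem' _ _ := rfl
  smul_mem' t f hf I h := by simp [hf I h]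

lemma mem_GG {n} {f : TT m} : f ∈ GG m n ↔ ∀ I, I.length + 1 ≠ n → f I = 0 := Iff.rfl

lemma GG_zero {f : TT m} (h : f ∈ GG m 0) : f = 0 := by
  funext I; exact h I (by simp)

lemma GG_nil {n} {f : TT m} (h : f ∈ GG m (n+2)) : f [] = 0 := h [] (by simp)

lemma GG_cmp {n} {f : TT m} (c) (h : f ∈ GG m (n+1)) : cmp c f ∈ GG m n := by
  intro I hI; exact h _ (by simpa using hI)

lemma GG_of {n} {f : TT m} (h0 : f [] = 0) (h : ∀ c, cmp c f ∈ GG m n) : f ∈ GG m (n+1) := by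
  intro I hI
  cases I with
  | nil => exact h0
  | cons c I => exact h c I (by simpa using hI)

lemma GG_cns {n} {f : TT m} (c) (h : f ∈ GG m n) : cns c f ∈ GG m (n+1) := by
  apply GG_of (by simp)
  intro d
  rw [cmp_cns]
  split_ifs
  · exact h
  · exact zero_mem _

lemma GG_EE {n} {f : TT m} (h : f ∈ GG m n) : EE r f ∈ GG m n := by
  intro I hI
  simp [EE, h I hI]

lemma GG_one : (one : TT m) ∈ GG m 1 := by
  intro I hI
  cases I with
  | nil => simp at hI
  | cons c I => simp [one]

lemma GG_rm {n} {f : TT m} (d) (h : f ∈ GG m n) : rm d f ∈ GG m (n+1) := by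
  intro I
  induction I generalizing f n with
  | nil => simp
  | cons c I ih =>
    intro hI
    refine ap_zero ?_
    rw [cmp_rm, Pi.add_apply]
    cases n with
    | zero => rw [GG_zero h]; simp
    | succ n =>
      rw [ih (GG_cmp c h) (by simpa using hI), zero_add]
      split_ifs
      · cases n with
        | zero => rw [Pi.smul_apply, GG_one I (by simpa using hI), smul_zero]
        | succ n => simp [GG_nil h]
      · rfl

lemma GG_del {n} {f : TT m} (h : f ∈ GG m n) : del r a b f ∈ GG m (n+1) := by
  intro I
  induction I generalizing f n with
  | nil => simp
  | cons c I ih =>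
    intro hI
    refine ap_zero ?_
    rw [cmp_del, Pi.add_apply]
    cases n with
    | zero => rw [GG_zero h]; simp
    | succ n =>
      rw [ih (GG_cmp c h) (by simpa using hI), zero_add]
      split_ifs
      · exact GG_cns a (GG_EE (GG_cmp b h)) I (by simpa using hI)
      · rfl

lemma GG_Th {n} {f : TT m} (h : f ∈ GG m n) : Th a b f ∈ GG m (n+2) :=
  sub_mem (GG_cns _ (GG_cns _ h)) (GG_cns _ (GG_cns _ h))

structure Hyp (r : ℕ) {m : ℕ} (a b : Fin m) : Prop where
  hab : a ≠ b
  ha : par r a = 0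
  hb : par r b = 1

noncomputable def KK (r : ℕ) {m : ℕ} (a b : Fin m) (n : ℕ) : Submodule ℂ (TT m) :=
  GG m n ⊓ LinearMap.ker (del r a b)

noncomputable def BB (r : ℕ) {m : ℕ} (a b : Fin m) (n : ℕ) : Submodule ℂ (TT m) :=
  Submodule.map (del r a b) (GG m (n - 1))

lemma mem_KK {n} {f : TT m} : f ∈ KK r a b n ↔ f ∈ GG m n ∧ del r a b f = 0 := Iff.rfl

lemma mem_BB {n} {f : TT m} : f ∈ BB r a b (n+1) ↔ ∃ z ∈ GG m n, del r a b z = f := Iff.rfl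

lemma BB_zero {f : TT m} (h : f ∈ BB r a b 0) : f = 0 := by
  obtain ⟨z, hz, rfl⟩ := h
  rw [GG_zero hz, map_zero]

lemma BB_one {f : TT m} (h : f ∈ BB r a b 1) : f = 0 := by
  obtain ⟨z, hz, rfl⟩ := h
  rw [GG_zero hz, map_zero]

lemma KK_zero {f : TT m} (h : f ∈ KK r a b 0) : f = 0 := GG_zero h.1

lemma BB_of {n} {z : TT m} (h : z ∈ GG m n) : del r a b z ∈ BB r a b (n+1) := ⟨z, h, rfl⟩

lemma BB_map (A : TT m →ₗ[ℂ] TT m) (k : ℕ) (hA : ∀ z, del r a b (A z) = A (del r a b z))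
    (hG : ∀ n f, f ∈ GG m n → A f ∈ GG m (n+k)) {n} {x : TT m} (h : x ∈ BB r a b n) :
    A x ∈ BB r a b (n+k) := by
  cases n with
  | zero => rw [BB_zero h, map_zero]; exact zero_mem _
  | succ n =>
    obtain ⟨z, hz, rfl⟩ := h
    rw [← hA]
    have := BB_of (r := r) (a := a) (b := b) (hG n z hz)
    rwa [show n + 1 + k = n + k + 1 by omega]

lemma KK_map (A : TT m →ₗ[ℂ] TT m) (k : ℕ) (hA : ∀ z, del r a b (A z) = A (del r a b z))
    (hG : ∀ n f, f ∈ GG m n → A f ∈ GG m (n+k)) {n} {x : TT m} (h : x ∈ KK r a b n) :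
    A x ∈ KK r a b (n+k) :=
  mem_KK.2 ⟨hG _ _ h.1, by rw [hA, h.2, map_zero]⟩

namespace Hyp

variable (H : Hyp r a b)
include H

lemma del_L (z : TT m) : del r a b (cns a z) = cns a (del r a b z) := by
  simp [del_cns, H.hab]

lemma del_R (z : TT m) : del r a b (rm a z) = rm a (del r a b z) := del_rm H.hab H.ha z

lemma del_T (z : TT m) : del r a b (Th a b z) = Th a b (del r a b z) := del_Th H.hab H.ha z

lemma del_E (z : TT m) : del r a b (EE r z) = - EE r (del r a b z) := by
  rw [EE_del H.ha H.hb, neg_neg]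

lemma dd (z : TT m) : del r a b (del r a b z) = 0 := del_del H.hab H.ha H.hb z

lemma BL {n} {x : TT m} (h : x ∈ BB r a b n) : cns a x ∈ BB r a b (n+1) :=
  BB_map _ 1 H.del_L (fun _ _ => GG_cns a) h
lemma BR {n} {x : TT m} (h : x ∈ BB r a b n) : rm a x ∈ BB r a b (n+1) :=
  BB_map _ 1 H.del_R (fun _ _ => GG_rm a) h
lemma BT {n} {x : TT m} (h : x ∈ BB r a b n) : Th a b x ∈ BB r a b (n+2) :=
  BB_map _ 2 H.del_T (fun _ _ => GG_Th) h
lemma KL {n} {x : TT m} (h : x ∈ KK r a b n) : cns a x ∈ KK r a b (n+1) :=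
  KK_map _ 1 H.del_L (fun _ _ => GG_cns a) h
lemma KR {n} {x : TT m} (h : x ∈ KK r a b n) : rm a x ∈ KK r a b (n+1) :=
  KK_map _ 1 H.del_R (fun _ _ => GG_rm a) h
lemma KT {n} {x : TT m} (h : x ∈ KK r a b n) : Th a b x ∈ KK r a b (n+2) :=
  KK_map _ 2 H.del_T (fun _ _ => GG_Th) h
lemma KE {n} {x : TT m} (h : x ∈ KK r a b n) : EE r x ∈ KK r a b n :=
  mem_KK.2 ⟨GG_EE h.1, by rw [H.del_E, h.2, map_zero, neg_zero]⟩
lemma BE {n} {x : TT m} (h : x ∈ BB r a b n) : EE r x ∈ BB r a b n := by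
  obtain ⟨z, hz, rfl⟩ := h
  refine ⟨- EE r z, neg_mem (GG_EE hz), ?_⟩
  rw [map_neg, H.del_E, neg_neg]
lemma BK {n} : BB r a b n ≤ KK r a b n := by
  intro x h
  cases n with
  | zero => rw [BB_zero h]; exact zero_mem _
  | succ n =>
    obtain ⟨z, hz, rfl⟩ := h
    exact ⟨GG_del hz, H.dd z⟩

lemma LLB {n} {u : TT m} (h : u ∈ KK r a b n) : cns a (cns a u) ∈ BB r a b (n+2) := by
  refine ⟨cns b (EE r u), GG_cns _ (GG_EE h.1), ?_⟩
  rw [del_cns _ H.hab, H.del_E, h.2]; simp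

lemma RRB {n} {u : TT m} (h : u ∈ KK r a b n) : rm a (rm a u) ∈ BB r a b (n+2) := by
  refine ⟨rm b u, GG_rm _ h.1, ?_⟩
  rw [del_rmb H.hab H.hb, h.2]; simp

lemma LTB {n} {u : TT m} (h : u ∈ KK r a b n) :
    cns a (Th a b u) + Th a b (cns a u) ∈ BB r a b (n+3) := by
  refine ⟨-cns b (cns b (EE r u)), neg_mem (GG_cns _ (GG_cns _ (GG_EE h.1))), ?_⟩
  have hd : del r a b u = 0 := h.2
  simp [del_cns, H.hab, H.del_E, hd, Th_app, EE_cns, H.hb, sub_eq_add_neg]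

lemma Lexact {n} {w : TT m} (_h : w ∈ KK r a b (n+1)) (hL : cns a w ∈ BB r a b (n+2)) :
    ∃ u ∈ KK r a b n, w - cns a u ∈ BB r a b (n+1) := by
  obtain ⟨z, hz, e⟩ := hL
  have ea := congrArg (cmp a) e
  have eb := congrArg (cmp b) e
  rw [cmp_del] at ea eb
  simp [H.hab.symm] at ea eb
  refine ⟨EE r (cmp b z), H.KE ⟨GG_cmp b hz, eb⟩, cmp a z, GG_cmp a hz, ?_⟩
  rw [← ea]; simp

lemma decomp {n} {w : TT m} (h : w ∈ KK r a b (n+2)) :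
    ∃ v ∈ KK r a b (n+2), ∃ w' ∈ KK r a b (n+1), ∃ w'' ∈ KK r a b n,
      cmp a v = 0 ∧ cmp b v = 0 ∧
      w - v - cns a w' - Th a b w'' ∈ BB r a b (n+2) := by
  have hab := H.hab
  have e : del r a b w = 0 := h.2
  have ea := congrArg (cmp a) e
  have eb := congrArg (cmp b) e
  have ec := fun c => congrArg (cmp c) e
  simp only [cmp_del, map_zero] at ea eb ec
  simp [hab.symm] at ea eb
  have hEb : EE r (cmp b w) ∈ KK r a b (n+1) := H.KE ⟨GG_cmp b h.1, eb⟩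
  obtain ⟨u, hu, y, hy, hyu⟩ := H.Lexact hEb
    ⟨-cmp a w, neg_mem (GG_cmp a h.1), by rw [map_neg]; linear_combination (exp := 1) -ea⟩
  have hu0 : del r a b u = 0 := hu.2
  have hwb : cmp b w = cns a (EE r u) - del r a b (EE r y) := by
    have := congrArg (EE r) hyu
    rw [map_sub, EE_EE, EE_cns, H.ha, EE_del H.ha H.hb] at this
    rw [pow_zero, one_smul] at this
    rw [sub_eq_add_neg, this]; abel
  refine ⟨w - cns a (cmp a w) - cns b (cmp b w), mem_KK.2 ⟨?_, ?_⟩,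
    cmp a w + cns b (EE r u) + cns a (EE r (EE r y)), mem_KK.2 ⟨?_, ?_⟩, - EE r u, neg_mem (H.KE hu), ?_, ?_,
    -cns b (EE r y), ?_, ?_⟩
  · exact sub_mem (sub_mem h.1 (GG_cns _ (GG_cmp _ h.1))) (GG_cns _ (GG_cmp _ h.1))
  · rw [map_sub, map_sub, e, del_cns _ hab, del_cns _ hab, eb]
    simp only [hab, if_false, if_true]
    have : del r a b (cmp a w) = - cns a (EE r (cmp b w)) := eq_neg_of_add_eq_zero_left ea
    rw [this]; simp
  · refine add_mem (add_mem (GG_cmp _ h.1) (GG_cns _ (GG_EE hu.1))) ?_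
    rw [EE_EE]; exact GG_cns _ hy
  · have : del r a b (cmp a w) = - cns a (EE r (cmp b w)) := eq_neg_of_add_eq_zero_left ea
    rw [map_add, map_add, this, hwb, del_cns _ hab, H.del_L]
    simp [EE_cns, H.ha, H.del_E, hu0]
  · simp [hab]
  · simp [hab.symm]
  · exact neg_mem (GG_cns _ (GG_EE hy))
  · rw [hwb]
    simp [Th_app, del_cns, hab]
    abel

lemma indep {n} {v w' w'' : TT m} (hva : cmp a v = 0) (hvb : cmp b v = 0)
    (h : v + cns a w' + Th a b w'' ∈ BB r a b (n+2)) :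
    (∀ c, cmp c v ∈ BB r a b (n+1)) ∧ cns a w'' ∈ BB r a b (n+1) := by
  have hab := H.hab
  obtain ⟨z, hz, e⟩ := h
  constructor
  · intro c
    by_cases hc : c = a
    · rw [hc, hva]; exact zero_mem _
    by_cases hc' : c = b
    · rw [hc', hvb]; exact zero_mem _
    refine ⟨cmp c z, GG_cmp c hz, ?_⟩
    have := congrArg (cmp c) e
    simpa [cmp_del, hc, hc', Th_app] using this
  · refine ⟨- cmp b z, neg_mem (GG_cmp b hz), ?_⟩
    have := congrArg (cmp b) e
    simp [cmp_del, hab.symm, hvb, Th_app] at this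
    rw [map_neg, this, neg_neg]

end Hyp
noncomputable def th (a b : Fin m) : ℕ → TT m
  | 0 => one
  | 1 => 0
  | n + 2 => Th a b (th a b n)

noncomputable def sg : ℕ → ℂ
  | 0 => 1
  | 1 => 1
  | n + 2 => - sg n

lemma sg_sq : ∀ n, sg n * sg n = 1
  | 0 => by simp [sg]
  | 1 => by simp [sg]
  | n + 2 => by simp [sg, sg_sq n]

lemma th_odd : ∀ n, n % 2 = 1 → th a b n = 0
  | 0 => by simp
  | 1 => by simp [th]
  | n + 2 => by intro h; rw [th, th_odd n (by omega), map_zero]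

namespace Hyp

variable (H : Hyp r a b)
include H

lemma thK : ∀ n, th a b n ∈ KK r a b (n+1)
  | 0 => ⟨GG_one, del_one⟩
  | 1 => zero_mem _
  | n + 2 => H.KT (thK n)

lemma thR : ∀ n, rm a (th a b n) - sg n • cns a (th a b n) ∈ BB r a b (n+2)
  | 0 => by simp [th, sg, rm_one]
  | 1 => by simp [th]
  | n + 2 => by
    have h1 := H.BT (thR n)
    have h2 := Submodule.smul_mem _ (sg n) (H.LTB (H.thK n))
    have h3 := add_mem h1 h2
    rw [th, sg, rm_Th]
    convert h3 using 1
    simp only [map_sub, map_smul]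
    module

lemma NT : ∀ n, n % 2 = 0 → ∀ v ∈ KK r a b n, ∀ z ∈ KK r a b n,
    th a b n - rm a v - cns a z ∉ BB r a b (n+1)
  | 0 => by
    intro _ v hv z hz h
    rw [KK_zero hv, KK_zero hz] at h
    have := congrFun (BB_one h) []
    simp [th] at this
  | 1 => by simp
  | n + 2 => by
    intro hn v hv z hz h
    obtain ⟨v0, h0, v', h', v'', h'', ea, eb, hd⟩ := H.decomp hv
    have h2 := add_mem h (H.BR hd)
    have h3 : (- rm a v0) + cns a (- rm a v' - z) + Th a b (th a b n - rm a v'') ∈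
        BB r a b (n+1+2) := by
      convert h2 using 1
      simp only [th, map_sub, rm_cns, rm_Th, map_neg]
      abel
    have h4 := (H.indep (by simp [cmp_rm, ea, GG_nil h0.1]) (by simp [cmp_rm, eb, H.hab.symm]) h3).2
    obtain ⟨u, hu, hu'⟩ := H.Lexact (sub_mem (H.thK n) (H.KR h'')) h4
    exact NT n (by omega) _ h'' _ hu hu'

lemma NTt (n : ℕ) (t : ℂ) {v z : TT m} (hv : v ∈ KK r a b n) (hz : z ∈ KK r a b n)
    (h : t • th a b n - rm a v - cns a z ∈ BB r a b (n+1)) : t • th a b n = 0 := by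
  by_cases ht : t = 0
  · simp [ht]
  rcases Nat.mod_two_eq_zero_or_one n with hn | hn
  · exfalso
    refine H.NT n hn (t⁻¹ • v) (Submodule.smul_mem _ _ hv) (t⁻¹ • z) (Submodule.smul_mem _ _ hz) ?_
    convert Submodule.smul_mem _ t⁻¹ h using 1
    rw [smul_sub, smul_sub, smul_smul, inv_mul_cancel₀ ht]
    simp
  · rw [th_odd n hn, smul_zero]

/-- assembling -/
lemma assemble {n} {v : TT m} (hv : v [] = 0) (hva : cmp a v = 0) (hvb : cmp b v = 0)
    (h : ∀ c, ∃ u ∈ KK r a b n, cmp c v - rm a u ∈ BB r a b (n+1)) :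
    ∃ u ∈ KK r a b (n+1), v - rm a u ∈ BB r a b (n+2) := by
  choose u hu y hy hyu using h
  let u' : Fin m → TT m := fun c => if c = a ∨ c = b then 0 else u c
  let y' : Fin m → TT m := fun c => if c = a ∨ c = b then 0 else y c
  have key : ∀ g : Fin m → TT m, g b = 0 →
      del r a b (∑ c, cns c (g c)) = ∑ c, cns c (del r a b (g c)) := by
    intro g hg
    rw [map_sum]
    refine Finset.sum_congr rfl fun c _ => ?_
    rw [del_cns _ H.hab]
    split_ifs with h
    · rw [h, hg]; simp
    · simp
  refine ⟨∑ c, cns c (u' c), mem_KK.2 ⟨sum_mem fun c _ => GG_cns _ ?_, ?_⟩,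
    ∑ c, cns c (y' c), sum_mem fun c _ => GG_cns _ ?_, ?_⟩
  · simp only [u']; split_ifs
    · exact zero_mem _
    · exact (hu c).1
  · rw [key _ (by simp [u'])]
    refine Finset.sum_eq_zero fun c _ => ?_
    simp only [u']; split_ifs
    · simp
    · have : del r a b (u c) = 0 := (hu c).2
      rw [this, map_zero]
  · simp only [y']; split_ifs
    · exact zero_mem _
    · exact hy c
  · rw [key _ (by simp [y'])]
    apply tt_ext
    · simp [hv, Finset.sum_apply]
    · intro c
      simp only [map_sum, cmp_cns, map_sub, rm_cns, Finset.sum_ite_eq, Finset.mem_univ, if_true, y', u']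
      split_ifs with hc
      · rcases hc with rfl | rfl
        · simp [hva]
        · simp [hvb]
      · exact hyu c

def PP (r : ℕ) (a b : Fin m) (n : ℕ) : Prop := ∀ w ∈ KK r a b (n+1), ∀ z ∈ KK r a b (n+1),
  rm a w - cns a z ∈ BB r a b (n+2) → ∃ v ∈ KK r a b n, ∃ y ∈ KK r a b n, ∃ t : ℂ,
    w - rm a v - cns a y - t • th a b n ∈ BB r a b (n+1)

def RX (r : ℕ) (a b : Fin m) (n : ℕ) : Prop := ∀ w ∈ KK r a b (n+1),
  rm a w ∈ BB r a b (n+2) → ∃ u ∈ KK r a b n, w - rm a u ∈ BB r a b (n+1)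

lemma P0 : PP r a b 0 := by
  intro w hw z hz h
  refine ⟨0, zero_mem _, 0, zero_mem _, w [], ?_⟩
  suffices this : w - rm a 0 - cns a 0 - w [] • th a b 0 = 0 by
    rw [this]; exact zero_mem _
  apply tt_ext
  · simp [th]
  · intro c
    have := GG_zero (GG_cmp c hw.1)
    simp [th, this]

lemma Pstep (n : ℕ) (hR : RX r a b n) (hP : ∀ k, n = k + 1 → PP r a b k) : PP r a b (n+1) := by
  intro w hw z hz h
  obtain ⟨v, hv, w', hw', w'', hw'', ea, eb, hd⟩ := H.decomp hw
  have hv0 : v [] = 0 := GG_nil hv.1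
  have h1 : rm a v + cns a (rm a w' - z) + Th a b (rm a w'') ∈ BB r a b (n+1+2) := by
    convert sub_mem h (H.BR hd) using 1
    simp only [map_sub, rm_cns, rm_Th]
    abel
  obtain ⟨h2, h3⟩ := H.indep (by simp [cmp_rm, ea, hv0]) (by simp [cmp_rm, eb, H.hab.symm]) h1
  have hvd : ∀ c, cmp c v ∈ KK r a b (n+1) := by
    intro c
    refine mem_KK.2 ⟨GG_cmp c hv.1, ?_⟩
    have e : del r a b v = 0 := hv.2
    have := congrArg (cmp c) e
    simpa [cmp_del, eb] using this
  obtain ⟨u, hu, hu'⟩ := H.assemble hv0 ea eb (fun c => hR _ (hvd c) (by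
    have := h2 c
    simpa [cmp_rm, hv0] using this))
  cases n with
  | zero =>
    refine ⟨u, hu, w', hw', 0, ?_⟩
    rw [KK_zero hw''] at hd
    convert add_mem hu' hd using 1
    simp; abel
  | succ k =>
    obtain ⟨x, hx, hx'⟩ := H.Lexact (H.KR hw'') h3
    obtain ⟨v1, hv1, y1, hy1, t, h5⟩ := hP k rfl w'' hw'' x hx hx'
    refine ⟨u + Th a b v1, add_mem hu (H.KT hv1), w' - Th a b y1, sub_mem hw' (H.KT hy1), t, ?_⟩
    convert add_mem (add_mem (add_mem hu' hd) (H.BT h5)) (H.LTB hy1) using 1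
    simp only [map_sub, map_add, rm_Th, th, map_smul]
    abel

lemma Rstep (n : ℕ) (hPn : PP r a b n) (hP : ∀ k, n = k + 1 → PP r a b k) : RX r a b n := by
  intro w hw h
  obtain ⟨v, hv, z, hz, t, h1⟩ := hPn w hw 0 (zero_mem _) (by simpa using h)
  have h2 : cns a (rm a z + (t * sg n) • th a b n) ∈ BB r a b (n+2) := by
    convert sub_mem (sub_mem (sub_mem h (H.BR h1)) (H.RRB hv)) (Submodule.smul_mem _ t (H.thR n)) using 1
    simp only [map_sub, map_add, rm_cns, map_smul]
    module
  obtain ⟨x, hx, h3⟩ := H.Lexact (add_mem (H.KR hz) (Submodule.smul_mem _ _ (H.thK n))) h2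
  have h4 := H.NTt n (t * sg n) (neg_mem hz) hx (by convert h3 using 1; simp; abel)
  have h5 : t • th a b n = 0 := by
    have := congrArg (fun y => sg n • y) h4
    simp only [smul_smul, smul_zero] at this
    rwa [show sg n * (t * sg n) = t * (sg n * sg n) by ring, sg_sq, mul_one] at this
  rw [h4, add_zero] at h3
  rw [h5, sub_zero] at h1
  cases n with
  | zero =>
    rw [KK_zero hz] at h1
    exact ⟨v, hv, by simpa using h1⟩
  | succ k =>
    obtain ⟨v1, hv1, y1, hy1, t1, h6⟩ := hP k rfl z hz x hx h3
    refine ⟨v + cns a v1 + (t1 * sg k) • th a b k,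
      add_mem (add_mem hv (H.KL hv1)) (Submodule.smul_mem _ _ (H.thK k)), ?_⟩
    convert sub_mem (add_mem (add_mem h1 (H.BL h6)) (H.LLB hy1))
      (Submodule.smul_mem _ (t1 * sg k) (H.thR k)) using 1
    have := sg_sq k
    simp only [map_sub, map_add, rm_cns, map_smul, smul_sub, smul_smul]
    rw [mul_assoc, this]
    module

lemma PR : ∀ n, PP r a b n ∧ RX r a b n ∧ PP r a b (n+1)
  | 0 => by
    have h0 := H.P0
    have h1 := H.Rstep 0 h0 (by omega)
    exact ⟨h0, h1, H.Pstep 0 h1 (by omega)⟩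
  | n + 1 => by
    obtain ⟨h0, h1, h2⟩ := PR n
    have hk : ∀ k, n + 1 = k + 1 → PP r a b k := by
      intro k hk
      obtain rfl : n = k := by omega
      exact h0
    have h3 := H.Rstep (n+1) h2 hk
    exact ⟨h2, h3, H.Pstep (n+1) h3 hk⟩

lemma P (n) : PP r a b n := (H.PR n).1

end Hyp
noncomputable def Ss (a : Fin m) (σ : ℂ) : TT m →ₗ[ℂ] TT m := cns a + σ • rm a

lemma Ss_app (σ : ℂ) (u : TT m) : Ss a σ u = cns a u + σ • rm a u := rfl

noncomputable def PK (r : ℕ) (a b : Fin m) (A : TT m →ₗ[ℂ] TT m) (n : ℕ) : Submodule ℂ (TT m) :=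
  KK r a b n ⊓ (BB r a b (n+1)).comap A

noncomputable def IK (r : ℕ) (a b : Fin m) (A : TT m →ₗ[ℂ] TT m) (n : ℕ) : Submodule ℂ (TT m) :=
  (KK r a b n).map A ⊔ BB r a b (n+1)

lemma mem_PK {A : TT m →ₗ[ℂ] TT m} {n} {u : TT m} :
    u ∈ PK r a b A n ↔ u ∈ KK r a b n ∧ A u ∈ BB r a b (n+1) := Iff.rfl

lemma mem_IK {A : TT m →ₗ[ℂ] TT m} {n} {u : TT m} :
    u ∈ IK r a b A n ↔ ∃ y ∈ KK r a b n, u - A y ∈ BB r a b (n+1) := by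
  rw [IK, Submodule.mem_sup]
  constructor
  · rintro ⟨_, ⟨y, hy, rfl⟩, z, hz, rfl⟩
    exact ⟨y, hy, by simpa using hz⟩
  · rintro ⟨y, hy, h⟩
    exact ⟨_, ⟨y, hy, rfl⟩, _, h, by simp⟩

lemma finrank_add_one {U V : Submodule ℂ (TT m)} [FiniteDimensional ℂ U] {X : TT m} (hUV : U ≤ V)
    (hX : X ∈ V) (hXU : X ∉ U)
    (h : ∀ v ∈ V, ∃ t : ℂ, v - t • X ∈ U) : Module.finrank ℂ V = Module.finrank ℂ U + 1 := by
  have hV : V = U ⊔ Submodule.span ℂ {X} := by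
    apply le_antisymm
    · intro v hv
      obtain ⟨t, ht⟩ := h v hv
      rw [Submodule.mem_sup]
      exact ⟨_, ht, t • X, Submodule.smul_mem _ _ (Submodule.mem_span_singleton_self X), by simp⟩
    · exact sup_le hUV (by rw [Submodule.span_singleton_le_iff_mem]; exact hX)
  have h0 : X ≠ 0 := fun h => hXU (h ▸ zero_mem _)
  have hd : U ⊓ Submodule.span ℂ {X} = ⊥ := by
    rw [eq_bot_iff]
    rintro x ⟨hx, hx'⟩
    obtain ⟨t, rfl⟩ := Submodule.mem_span_singleton.1 hx'
    by_cases ht : t = 0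
    · simp [ht]
    · exact (hXU (by simpa [smul_smul, ht] using U.smul_mem t⁻¹ hx)).elim
  have := Submodule.finrank_sup_add_finrank_inf_eq U (Submodule.span ℂ {X})
  rw [hd, finrank_bot, add_zero, finrank_span_singleton h0] at this
  rw [hV, this]

namespace Hyp

variable (H : Hyp r a b)
include H

lemma del_S (σ : ℂ) (z : TT m) : del r a b (Ss a σ z) = Ss a σ (del r a b z) := by
  simp [Ss_app, H.del_L, H.del_R]

lemma KS (σ : ℂ) {n} {x : TT m} (h : x ∈ KK r a b n) : Ss a σ x ∈ KK r a b (n+1) :=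
  add_mem (H.KL h) (Submodule.smul_mem _ _ (H.KR h))

lemma BS (σ : ℂ) {n} {x : TT m} (h : x ∈ BB r a b n) : Ss a σ x ∈ BB r a b (n+1) :=
  add_mem (H.BL h) (Submodule.smul_mem _ _ (H.BR h))

lemma SS (σ : ℂ) {n} {x : TT m} (h : x ∈ KK r a b n) :
    Ss a σ (Ss a (-σ) x) ∈ BB r a b (n+2) := by
  convert sub_mem (H.LLB h) (Submodule.smul_mem _ (σ*σ) (H.RRB h)) using 1
  simp only [Ss_app, map_add, map_smul, rm_cns]
  module

lemma I_le_P (σ : ℂ) (n) : IK r a b (Ss a (-σ)) n ≤ PK r a b (Ss a σ) (n+1) := by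
  intro u hu
  obtain ⟨y, hy, h⟩ := mem_IK.1 hu
  refine mem_PK.2 ⟨?_, ?_⟩
  · have := add_mem (H.BK h) (H.KS (-σ) hy)
    simpa using this
  · have := add_mem (H.BS σ h) (H.SS σ hy)
    simpa using this

lemma kerS {σ : ℂ} (hσ : σ * σ = 1) {n} {u : TT m} (hu : u ∈ PK r a b (Ss a σ) (n+1)) :
    ∃ y ∈ KK r a b n, ∃ t : ℂ, (t * (1 + σ * sg n)) • th a b n = 0 ∧
      ((n = 0 ∧ u - Ss a (-σ) y - t • th a b n ∈ BB r a b (n+1)) ∨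
       ∃ k, n = k + 1 ∧ ∃ t' : ℂ,
        u - Ss a (-σ) y - t • th a b n - t' • cns a (th a b k) ∈ BB r a b (n+1)) := by
  obtain ⟨hu, hS⟩ := mem_PK.1 hu
  rw [Ss_app] at hS
  obtain ⟨v, hv, z, hz, t, h1⟩ := H.P n u hu (-(σ • u)) (neg_mem (Submodule.smul_mem _ _ hu)) (by
    convert Submodule.smul_mem _ σ hS using 1
    rw [smul_add, smul_smul, hσ]
    simp only [map_neg, map_smul]
    module)
  have h2 : cns a (rm a (v + σ • z) + (t * (1 + σ * sg n)) • th a b n) ∈ BB r a b (n+2) := by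
    convert sub_mem (sub_mem (sub_mem (sub_mem hS (H.BS σ h1))
      (Submodule.smul_mem _ σ (H.RRB hv))) (Submodule.smul_mem _ (t * σ) (H.thR n))) (H.LLB hz) using 1
    simp only [Ss_app, map_sub, map_add, rm_cns, map_smul]
    module
  have hvz : v + σ • z ∈ KK r a b n := add_mem hv (Submodule.smul_mem _ _ hz)
  obtain ⟨x, hx, h3⟩ := H.Lexact (add_mem (H.KR hvz) (Submodule.smul_mem _ _ (H.thK n))) h2
  have h4 := H.NTt n (t * (1 + σ * sg n)) (neg_mem hvz) hx (by convert h3 using 1; simp only [map_neg]; abel)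
  rw [h4, add_zero] at h3
  cases n with
  | zero =>
    refine ⟨0, zero_mem _, t, h4, Or.inl ⟨rfl, ?_⟩⟩
    rw [KK_zero hv, KK_zero hz] at h1
    simpa using h1
  | succ k =>
    obtain ⟨v1, hv1, y1, hy1, t1, h6⟩ := H.P k _ hvz x hx h3
    refine ⟨-(σ • v) + σ • rm a v1, add_mem (neg_mem (Submodule.smul_mem _ _ hv))
      (Submodule.smul_mem _ _ (H.KR hv1)), t, h4, Or.inr ⟨k, rfl, σ * t1, ?_⟩⟩
    convert add_mem (add_mem (add_mem h1 (Submodule.smul_mem _ σ (H.BL h6)))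
      (Submodule.smul_mem _ σ (H.LLB hy1))) (H.RRB hv1) using 1
    have e1 : σ • σ • cns a z = cns a z := by rw [smul_smul, hσ, one_smul]
    have e2 : σ • σ • rm a v = rm a v := by rw [smul_smul, hσ, one_smul]
    have e3 : σ • σ • rm a (rm a v1) = rm a (rm a v1) := by rw [smul_smul, hσ, one_smul]
    simp only [Ss_app, map_sub, map_add, map_neg, rm_cns, map_smul, smul_add, smul_sub, smul_neg,
      neg_smul, neg_neg, e1, e2, e3, mul_smul]
    abel

lemma thS (σ : ℂ) (n) : Ss a σ (th a b n) - (1 + σ * sg n) • cns a (th a b n) ∈ BB r a b (n+2) := by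
  convert Submodule.smul_mem _ σ (H.thR n) using 1
  rw [Ss_app]; module

lemma caseA {σ : ℂ} (hσ : σ * σ = 1) {n} (hn : n % 2 = 0) (h : σ * sg n = 1) :
    PK r a b (Ss a σ) (n+1) = IK r a b (Ss a (-σ)) n := by
  refine le_antisymm (fun u hu => ?_) (H.I_le_P σ n)
  obtain ⟨y, hy, t, ht, h1⟩ := H.kerS hσ hu
  have ht' : t • th a b n = 0 := by
    rw [h, show t * (1 + 1) = 2 * t by ring, mul_smul] at ht
    exact (smul_eq_zero_iff_right (two_ne_zero)).1 ht
  refine mem_IK.2 ⟨y, hy, ?_⟩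
  rcases h1 with ⟨_, h1⟩ | ⟨k, hk, t', h1⟩
  · simpa [ht'] using h1
  · rw [th_odd k (by omega), ht'] at h1
    simpa using h1

lemma caseC {σ : ℂ} (hσ : σ * σ = 1) {k} (hn : k % 2 = 0) (h : σ * sg k = -1) :
    PK r a b (Ss a σ) (k+1+1) = IK r a b (Ss a (-σ)) (k+1) := by
  refine le_antisymm (fun u hu => ?_) (H.I_le_P σ _)
  obtain ⟨y, hy, t, ht, h1⟩ := H.kerS hσ hu
  rcases h1 with ⟨h0, _⟩ | ⟨k', hk, t', h1⟩
  · omega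
  obtain rfl : k' = k := by omega
  refine mem_IK.2 ⟨y + (t' / 2) • th a b k', add_mem hy (Submodule.smul_mem _ _ (H.thK _)), ?_⟩
  rw [th_odd (k'+1) (by omega)] at h1
  convert sub_mem h1 (Submodule.smul_mem _ (t'/2) (H.thS (-σ) k')) using 1
  rw [neg_mul, h]
  simp only [map_add, map_smul]
  module

lemma caseB {σ : ℂ} (hσ : σ * σ = 1) {n} (hn : n % 2 = 0) (h : σ * sg n = -1)
    [FiniteDimensional ℂ (IK r a b (Ss a (-σ)) n)] :
    Module.finrank ℂ (PK r a b (Ss a σ) (n+1)) = Module.finrank ℂ (IK r a b (Ss a (-σ)) n) + 1 := by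
  apply finrank_add_one (X := th a b n) (H.I_le_P σ n)
  · refine mem_PK.2 ⟨H.thK n, ?_⟩
    have := H.thS σ n
    rw [h] at this
    simpa using this
  · intro hI
    obtain ⟨y, hy, h1⟩ := mem_IK.1 hI
    refine H.NT n hn (-(σ • y)) (neg_mem (Submodule.smul_mem _ _ hy)) y hy ?_
    convert h1 using 1
    simp only [Ss_app, map_neg, map_smul]
    module
  · intro u hu
    obtain ⟨y, hy, t, ht, h1⟩ := H.kerS hσ hu
    refine ⟨t, mem_IK.2 ⟨y, hy, ?_⟩⟩
    rcases h1 with ⟨_, h1⟩ | ⟨k, hk, t', h1⟩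
    · convert h1 using 1; abel
    · rw [th_odd k (by omega)] at h1
      convert h1 using 1; simp; abel

lemma caseD {σ : ℂ} (hσ : σ * σ = 1) {k} (hn : k % 2 = 0) (h : σ * sg k = 1)
    [FiniteDimensional ℂ (IK r a b (Ss a (-σ)) (k+1))] :
    Module.finrank ℂ (PK r a b (Ss a σ) (k+1+1)) =
      Module.finrank ℂ (IK r a b (Ss a (-σ)) (k+1)) + 1 := by
  apply finrank_add_one (X := cns a (th a b k)) (H.I_le_P σ _)
  · refine mem_PK.2 ⟨H.KL (H.thK k), ?_⟩
    have h1 := H.BL (H.thR k)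
    convert add_mem (Submodule.smul_mem _ σ h1) (Submodule.smul_mem _ (1 + σ * sg k) (H.LLB (H.thK k))) using 1
    simp only [Ss_app, map_sub, map_smul, rm_cns]
    module
  · intro hI
    obtain ⟨y, hy, h1⟩ := mem_IK.1 hI
    have hz : cns a (th a b k) - cns a y ∈ BB r a b (k+1+1) → True := fun _ => trivial
    obtain ⟨v, hv, z, hz, t, h2⟩ := H.P k y hy (σ • (y - th a b k))
      (Submodule.smul_mem _ _ (sub_mem hy (H.thK k))) (by
        convert Submodule.smul_mem _ σ h1 using 1
        have e2 : σ • σ • rm a y = rm a y := by rw [smul_smul, hσ, one_smul]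
        simp only [Ss_app, map_sub, map_smul, smul_sub, smul_add, neg_smul, smul_neg, e2]
        abel)
    have hvz : v - σ • z ∈ KK r a b k := sub_mem hv (Submodule.smul_mem _ _ hz)
    have h3 : cns a (th a b k - rm a (v - σ • z)) ∈ BB r a b (k+2) := by
      have h4 := H.thS (-σ) k
      rw [neg_mul, h] at h4
      convert add_mem (add_mem (add_mem (add_mem h1 (H.BS (-σ) h2)) (Submodule.smul_mem _ t h4))
        (H.LLB hz)) (Submodule.smul_mem _ (-σ) (H.RRB hv)) using 1
      simp only [Ss_app, map_sub, map_add, rm_cns, map_smul]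
      module
    obtain ⟨x, hx, h5⟩ := H.Lexact (sub_mem (H.thK k) (H.KR hvz)) h3
    exact H.NT k hn _ hvz _ hx h5
  · intro u hu
    obtain ⟨y, hy, t, ht, h1⟩ := H.kerS hσ hu
    rcases h1 with ⟨h0, _⟩ | ⟨k', hk, t', h1⟩
    · omega
    obtain rfl : k' = k := by omega
    refine ⟨t', mem_IK.2 ⟨y, hy, ?_⟩⟩
    rw [th_odd (k'+1) (by omega)] at h1
    convert h1 using 1; simp; abel

lemma caseL (n) : PK r a b (cns a) (n+1) = IK r a b (cns a) n := by
  apply le_antisymm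
  · intro u hu
    obtain ⟨y, hy, h⟩ := H.Lexact hu.1 hu.2
    exact mem_IK.2 ⟨y, hy, h⟩
  · intro u hu
    obtain ⟨y, hy, h⟩ := mem_IK.1 hu
    refine mem_PK.2 ⟨?_, ?_⟩
    · simpa using add_mem (H.BK h) (H.KL hy)
    · simpa using add_mem (H.BL h) (H.LLB hy)

end Hyp

open Module in
lemma rn {V W : Type*} [AddCommGroup V] [Module ℂ V] [AddCommGroup W] [Module ℂ W]
    (f : V →ₗ[ℂ] W) (U : Submodule ℂ V) [FiniteDimensional ℂ U] :
    finrank ℂ (U.map f) + finrank ℂ (U ⊓ LinearMap.ker f : Submodule ℂ V) = finrank ℂ U := by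
  have h := LinearMap.finrank_range_add_finrank_ker (f.domRestrict U)
  rw [LinearMap.range_domRestrict, LinearMap.ker_domRestrict, ← Submodule.finrank_map_subtype_eq,
    Submodule.map_comap_subtype] at h
  exact h

def GGeq (m n : ℕ) : GG m (n+1) ≃ₗ[ℂ] (List.Vector (Fin m) n → ℂ) where
  toFun f v := f.1 v.1
  invFun g := ⟨fun I => if h : I.length = n then g ⟨I, h⟩ else 0, by
    rw [mem_GG]
    intro I hI
    rw [dif_neg (by omega)]⟩
  map_add' _ _ := rfl
  map_smul' _ _ := rfl
  left_inv f := by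
    ext I
    by_cases h : I.length = n
    · simp [h]
    · simp [h, f.2 I (by omega)]
  right_inv g := by
    ext ⟨I, h⟩
    simp [h]

instance GGfin (m n : ℕ) : FiniteDimensional ℂ (GG m n) := by
  cases n with
  | zero =>
    have : GG m 0 = ⊥ := (Submodule.eq_bot_iff _).2 fun f hf => GG_zero hf
    rw [this]; infer_instance
  | succ n => exact LinearEquiv.finiteDimensional (GGeq m n).symm

open Module in
lemma finrank_GG0 (m : ℕ) : finrank ℂ (GG m 0) = 0 := by
  have : GG m 0 = ⊥ := (Submodule.eq_bot_iff _).2 fun f hf => GG_zero hf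
  rw [this, finrank_bot]

open Module in
lemma finrank_GG (m n : ℕ) : finrank ℂ (GG m (n+1)) = m ^ n := by
  rw [(GGeq m n).finrank_eq, Module.finrank_fintype_fun_eq_card, card_vector, Fintype.card_fin]

instance KKfin (n : ℕ) : FiniteDimensional ℂ (KK r a b n) :=
  Submodule.finiteDimensional_of_le (inf_le_left : KK r a b n ≤ GG m n)

instance BBfin (n : ℕ) : FiniteDimensional ℂ (BB r a b n) := by
  unfold BB; infer_instance

instance PKfin (A : TT m →ₗ[ℂ] TT m) (n : ℕ) : FiniteDimensional ℂ (PK r a b A n) :=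
  Submodule.finiteDimensional_of_le (inf_le_left : PK r a b A n ≤ KK r a b n)

instance IKfin (A : TT m →ₗ[ℂ] TT m) (n : ℕ) : FiniteDimensional ℂ (IK r a b A n) := by
  unfold IK; infer_instance

open Module in
lemma IP (A : TT m →ₗ[ℂ] TT m) (n : ℕ) :
    finrank ℂ (IK r a b A n) + finrank ℂ (PK r a b A n) = finrank ℂ (GG m n) := by
  have h1 := rn ((BB r a b (n+1)).mkQ ∘ₗ A) (KK r a b n)
  have h2 := rn ((BB r a b (n+1)).mkQ) (IK r a b A n)
  have h3 := rn (del r a b) (GG m n)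
  have e1 : KK r a b n ⊓ LinearMap.ker ((BB r a b (n+1)).mkQ ∘ₗ A) = PK r a b A n := by
    rw [LinearMap.ker_comp, Submodule.ker_mkQ]; rfl
  have e2 : IK r a b A n ⊓ LinearMap.ker (BB r a b (n+1)).mkQ = BB r a b (n+1) := by
    rw [Submodule.ker_mkQ]; exact inf_eq_right.2 le_sup_right
  have e3 : (IK r a b A n).map (BB r a b (n+1)).mkQ
      = (KK r a b n).map ((BB r a b (n+1)).mkQ ∘ₗ A) := by
    rw [IK, Submodule.map_sup, Submodule.mkQ_map_self, sup_bot_eq, Submodule.map_comp]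
  rw [e1] at h1
  rw [e2, e3] at h2
  change finrank ℂ (BB r a b (n+1)) + finrank ℂ (KK r a b n) = _ at h3
  omega

def piEq (S : Fin m → Submodule ℂ (TT m)) : Submodule.pi Set.univ S ≃ₗ[ℂ] (∀ x, S x) where
  toFun F x := ⟨F.1 x, F.2 x trivial⟩
  invFun G := ⟨fun x => (G x).1, fun x _ => (G x).2⟩
  map_add' _ _ := rfl
  map_smul' _ _ := rfl
  left_inv _ := rfl
  right_inv _ := rfl

open Module in
lemma finrank_piS (S : Fin m → Submodule ℂ (TT m)) [∀ x, FiniteDimensional ℂ (S x)] :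
    finrank ℂ (Submodule.pi Set.univ S) = ∑ x, finrank ℂ (S x) := by
  rw [(piEq S).finrank_eq, Module.finrank_pi_fintype]

instance piSfin (S : Fin m → Submodule ℂ (TT m)) [∀ x, FiniteDimensional ℂ (S x)] :
    FiniteDimensional ℂ (Submodule.pi Set.univ S) :=
  LinearEquiv.finiteDimensional (piEq S).symm

noncomputable def Psi (r : ℕ) (a b : Fin m) (A : TT m →ₗ[ℂ] TT m) (p q : Fin m) (n : ℕ) :
    Submodule ℂ (Fin m → TT m) where
  carrier := {F | (∀ x, F x ∈ GG m n) ∧ (∀ x, x ≠ q → del r a b (F x) = 0) ∧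
    A (F p) = del r a b (F q)}
  add_mem' := by
    rintro F G ⟨h1, h2, h3⟩ ⟨k1, k2, k3⟩
    exact ⟨fun x => add_mem (h1 x) (k1 x), fun x hx => by simp [h2 x hx, k2 x hx],
      by simp [h3, k3]⟩
  zero_mem' := ⟨fun x => zero_mem _, fun x _ => by simp, by simp⟩
  smul_mem' := by
    rintro t F ⟨h1, h2, h3⟩
    exact ⟨fun x => Submodule.smul_mem _ _ (h1 x), fun x hx => by simp [h2 x hx], by simp [h3]⟩

lemma mem_Psi {A : TT m →ₗ[ℂ] TT m} {p q : Fin m} {n} {F : Fin m → TT m} :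
    F ∈ Psi r a b A p q n ↔ (∀ x, F x ∈ GG m n) ∧ (∀ x, x ≠ q → del r a b (F x) = 0) ∧
    A (F p) = del r a b (F q) := Iff.rfl

instance Psifin (A : TT m →ₗ[ℂ] TT m) (p q : Fin m) (n) :
    FiniteDimensional ℂ (Psi r a b A p q n) :=
  Submodule.finiteDimensional_of_le
    (show Psi r a b A p q n ≤ Submodule.pi Set.univ (fun _ => GG m n) from
      fun _ hF x _ => hF.1 x)

def zer (q : Fin m) : (Fin m → TT m) →ₗ[ℂ] (Fin m → TT m) where
  toFun F x := if x = q then 0 else F x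
  map_add' F G := by funext x; by_cases h : x = q <;> simp [h]
  map_smul' t F := by funext x; by_cases h : x = q <;> simp [h]

lemma fin_ite (c : Prop) [Decidable c] (U V : Submodule ℂ (TT m)) (hU : FiniteDimensional ℂ U)
    (hV : FiniteDimensional ℂ V) : FiniteDimensional ℂ (if c then U else V : Submodule ℂ (TT m)) := by
  by_cases h : c
  · rwa [if_pos h]
  · rwa [if_neg h]

open Module in
lemma finrank_Psi (A : TT m →ₗ[ℂ] TT m) {p q : Fin m} (hpq : p ≠ q) (n : ℕ) :
    finrank ℂ (Psi r a b A p q n)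
      = (m - 1) * finrank ℂ (KK r a b n) + finrank ℂ (PK r a b A n) := by
  have h := rn (zer q) (Psi r a b A p q n)
  set S1 : Fin m → Submodule ℂ (TT m) := fun x =>
    if x = q then ⊥ else if x = p then PK r a b A n else KK r a b n with hS1
  set S2 : Fin m → Submodule ℂ (TT m) := fun x =>
    if x = q then KK r a b n else ⊥ with hS2
  have f1 : ∀ x, FiniteDimensional ℂ (S1 x) := by
    intro x
    have hh : S1 x = if x = q then ⊥ else if x = p then PK r a b A n else KK r a b n := rfl
    rw [hh]; exact fin_ite _ _ _ inferInstance (fin_ite _ _ _ inferInstance inferInstance)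
  have f2 : ∀ x, FiniteDimensional ℂ (S2 x) := by
    intro x
    have hh : S2 x = if x = q then KK r a b n else ⊥ := rfl
    rw [hh]; exact fin_ite _ _ _ inferInstance inferInstance
  have e1 : (Psi r a b A p q n).map (zer q) = Submodule.pi Set.univ S1 := by
    apply le_antisymm
    · rintro _ ⟨F, hF, rfl⟩ x -
      obtain ⟨h1, h2, h3⟩ := mem_Psi.1 hF
      simp only [hS1, zer, LinearMap.coe_mk, AddHom.coe_mk]
      split_ifs with hq hp
      · exact zero_mem _
      · subst hp
        exact mem_PK.2 ⟨mem_KK.2 ⟨h1 _, h2 _ hq⟩, by rw [h3]; exact BB_of (h1 q)⟩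
      · exact mem_KK.2 ⟨h1 _, h2 _ hq⟩
    · intro F hF
      have hF' : ∀ x, F x ∈ S1 x := fun x => hF x trivial
      have hp := hF' p
      have hq := hF' q
      simp only [hS1, if_neg hpq, if_true] at hp hq
      obtain ⟨z, hz, hz'⟩ := mem_BB.1 (mem_PK.1 hp).2
      have hK : ∀ x, x ≠ q → F x ∈ KK r a b n := by
        intro x hx
        have := hF' x
        simp only [hS1, if_neg hx] at this
        split_ifs at this with hxp
        · exact this.1
        · exact this
      refine ⟨Function.update F q z, mem_Psi.2 ⟨fun x => ?_, fun x hx => ?_, ?_⟩, ?_⟩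
      · by_cases hx : x = q
        · subst hx; simpa using hz
        · rw [Function.update_of_ne hx]; exact (hK x hx).1
      · rw [Function.update_of_ne hx]; exact (hK x hx).2
      · rw [Function.update_of_ne hpq, Function.update_self, hz']
      · funext x
        by_cases hx : x = q
        · subst hx; simpa [zer] using hq.symm
        · simp [zer, hx]
  have e2 : Psi r a b A p q n ⊓ LinearMap.ker (zer q) = Submodule.pi Set.univ S2 := by
    apply le_antisymm
    · rintro F ⟨hF, hk⟩ x -
      obtain ⟨h1, h2, h3⟩ := mem_Psi.1 hF
      have hk' : ∀ x, x ≠ q → F x = 0 := by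
        intro x hx
        have := congrFun (LinearMap.mem_ker.1 hk) x
        simpa [zer, hx] using this
      simp only [hS2]
      split_ifs with hx
      · subst hx
        refine mem_KK.2 ⟨h1 _, ?_⟩
        rw [← h3, hk' p hpq, map_zero]
      · rw [hk' x hx]; exact zero_mem _
    · intro F hF
      have hF' : ∀ x, F x ∈ S2 x := fun x => hF x trivial
      have hq := hF' q
      simp only [hS2, if_true] at hq
      have h0 : ∀ x, x ≠ q → F x = 0 := by
        intro x hx
        have := hF' x
        simpa [hS2, hx] using this
      refine ⟨mem_Psi.2 ⟨fun x => ?_, fun x hx => ?_, ?_⟩, ?_⟩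
      · by_cases hx : x = q
        · subst hx; exact hq.1
        · rw [h0 x hx]; exact zero_mem _
      · rw [h0 x hx, map_zero]
      · rw [h0 p hpq, map_zero]; exact hq.2.symm
      · refine LinearMap.mem_ker.2 ?_
        funext x
        by_cases hx : x = q
        · simp [zer, hx]
        · simp [zer, hx, h0 x hx]
  rw [e1, e2, finrank_piS, finrank_piS, ← Finset.sum_add_distrib] at h
  rw [← h]
  have : ∀ x, finrank ℂ (S1 x) + finrank ℂ (S2 x)
      = if x = p then finrank ℂ (PK r a b A n) else finrank ℂ (KK r a b n) := by
    intro x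
    by_cases hx : x = q
    · have hh : S1 x = ⊥ := by simp [hS1, hx]
      have hh' : S2 x = KK r a b n := by simp [hS2, hx]
      rw [hh, hh', finrank_bot, zero_add, if_neg (by rw [hx]; exact hpq.symm)]
    · have hh' : S2 x = ⊥ := by simp [hS2, hx]
      rw [hh', finrank_bot, add_zero]
      by_cases hp : x = p
      · have hh : S1 x = PK r a b A n := by simp only [hS1, if_neg hx, if_pos hp]
        rw [hh, if_pos hp]
      · have hh : S1 x = KK r a b n := by simp only [hS1, if_neg hx, if_neg hp]
        rw [hh, if_neg hp]
  rw [Finset.sum_congr rfl fun x _ => this x, ← Finset.add_sum_erase _ _ (Finset.mem_univ p),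
    if_pos rfl, Finset.sum_congr rfl fun x hx => if_neg (Finset.ne_of_mem_erase hx),
    Finset.sum_const, Finset.card_erase_of_mem (Finset.mem_univ p), Finset.card_univ,
    Fintype.card_fin, smul_eq_mul, add_comm]

def unc (F : Fin m → TT m) : TT m
  | [] => 0
  | c :: I => F c I

lemma cmp_unc (F : Fin m → TT m) (c) : cmp c (unc F) = F c := rfl

def cmpAll : TT m →ₗ[ℂ] (Fin m → TT m) where
  toFun f c := cmp c f
  map_add' f g := by funext c; simp
  map_smul' t f := by funext c; simp

lemma sg4 : ∀ k, sg (4*k) = 1 ∧ sg (4*k+2) = -1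
  | 0 => by simp [sg]
  | k+1 => by
    have := sg4 k
    rw [show 4*(k+1) = 4*k+2+2 by ring]
    simp [sg, this.1]

lemma sg_0 {n} (h : n % 4 = 0) : sg n = 1 := by
  have := (sg4 (n/4)).1
  rwa [show 4*(n/4) = n by omega] at this

lemma sg_2 {n} (h : n % 4 = 2) : sg n = -1 := by
  have := (sg4 (n/4)).2
  rwa [show 4*(n/4)+2 = n by omega] at this

open Module in
lemma PK_zero (A : TT m →ₗ[ℂ] TT m) : finrank ℂ (PK r a b A 0) = 0 := by
  have : PK r a b A 0 = ⊥ := (Submodule.eq_bot_iff _).2 fun f hf => KK_zero hf.1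
  rw [this, finrank_bot]

namespace Hyp
variable (H : Hyp r a b)
include H

open Module

lemma gg (n) : finrank ℂ (PK r a b (cns a) (n+1)) + finrank ℂ (PK r a b (cns a) n)
    = finrank ℂ (GG m n) := by
  rw [H.caseL, IP]

lemma PKE (n) : PK r a b (-(cns a ∘ₗ EE r)) n = PK r a b (cns a) n := by
  have hE : ∀ u : TT m, EE r (cns a u) = cns a (EE r u) := by
    intro u; rw [EE_cns, H.ha]; simp
  ext u
  rw [mem_PK, mem_PK]
  refine and_congr_right fun _ => ?_
  rw [LinearMap.neg_apply, neg_mem_iff, LinearMap.comp_apply, ← hE]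
  constructor
  · intro h
    have := H.BE h
    rwa [EE_EE] at this
  · exact fun h => H.BE h

lemma kk (n) : finrank ℂ (KK r a b (n+2)) = (m-1) * finrank ℂ (KK r a b (n+1))
    + finrank ℂ (PK r a b (cns a) (n+1)) := by
  rw [← H.PKE, ← finrank_Psi _ H.hab.symm]
  have h := rn (cmpAll) (KK r a b (n+2))
  have e1 : KK r a b (n+2) ⊓ LinearMap.ker cmpAll = ⊥ := by
    rw [Submodule.eq_bot_iff]
    rintro f ⟨h1, h2⟩
    exact tt_ext (GG_nil h1.1) fun c => congrFun (LinearMap.mem_ker.1 h2) c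
  have e2 : (KK r a b (n+2)).map cmpAll = Psi r a b (-(cns a ∘ₗ EE r)) b a (n+1) := by
    apply le_antisymm
    · rintro _ ⟨f, hf, rfl⟩
      have hc : ∀ c, del r a b (cmp c f) + (if c = a then cns a (EE r (cmp b f)) else 0) = 0 := by
        intro c
        rw [← cmp_del, hf.2, map_zero]
      refine mem_Psi.2 ⟨fun x => GG_cmp x hf.1, fun x hx => ?_, ?_⟩
      · have := hc x
        rwa [if_neg hx, add_zero] at this
      · have := hc a
        rw [if_pos rfl] at this
        exact (eq_neg_of_add_eq_zero_left this).symm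
    · intro F hF
      obtain ⟨h1, h2, h3⟩ := mem_Psi.1 hF
      refine ⟨unc F, mem_KK.2 ⟨GG_of rfl h1, ?_⟩, rfl⟩
      refine tt_ext rfl fun c => ?_
      rw [cmp_del, cmp_unc, cmp_unc, map_zero]
      split_ifs with hc
      · subst hc
        rw [← h3]
        simp
      · rw [h2 c hc, add_zero]
  rw [e1, e2, finrank_bot, add_zero] at h
  exact h.symm

lemma kappa0 : finrank ℂ (KK r a b 0) = 0 := by
  have : KK r a b 0 = ⊥ := (Submodule.eq_bot_iff _).2 fun f hf => KK_zero hf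
  rw [this, finrank_bot]

lemma kappa1 : finrank ℂ (KK r a b 1) = 1 := by
  have : KK r a b 1 = GG m 1 := by
    refine le_antisymm inf_le_left fun f hf => mem_KK.2 ⟨hf, ?_⟩
    refine tt_ext rfl fun c => ?_
    have h0 : ∀ c, cmp c f = 0 := fun c => GG_zero (GG_cmp c hf)
    rw [cmp_del, h0, h0]
    simp
  rw [this, finrank_GG, pow_zero]

lemma kappa (n) : finrank ℂ (KK r a b (n+1)) + finrank ℂ (KK r a b n)
    = (m-1)^n + finrank ℂ (GG m n) := by
  induction n with
  | zero => rw [H.kappa0, H.kappa1, finrank_GG0, pow_zero]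
  | succ n ih =>
    have h1 := H.kk n
    have hg := H.gg n
    have hm : 1 ≤ m := by have := a.2; omega
    cases n with
    | zero =>
      have h3 := H.kappa1
      have h5 := finrank_GG m 0
      rw [PK_zero, finrank_GG0] at hg
      rw [H.kappa1] at h1
      simp only [zero_add, pow_zero, pow_one, mul_one, Nat.reduceAdd] at h1 hg h3 h5 ⊢
      omega
    | succ n =>
      have h2 := H.kk n
      rw [finrank_GG] at *
      have : m * m ^ n = (m-1) * m^n + m^n := by
        obtain ⟨k, rfl⟩ := Nat.exists_eq_add_of_le' hm
        simp; ring
      have e : (m-1) * (finrank ℂ (KK r a b (n+1+1)) + finrank ℂ (KK r a b (n+1)))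
        = (m-1) * ((m-1)^(n+1) + m^n) := by rw [ih]
      rw [mul_add, mul_add] at e
      rw [pow_succ' (m-1) (n+1), pow_succ' m n]
      change finrank ℂ (KK r a b (n+1+1)) = _ at h2
      change finrank ℂ (KK r a b (n+1+1+1)) = _ at h1
      omega

lemma Qp (n) : finrank ℂ (PK r a b (Ss a 1) (n+1)) + finrank ℂ (PK r a b (Ss a (-1)) n)
    = finrank ℂ (GG m n) + if n % 4 = 1 ∨ n % 4 = 2 then 1 else 0 := by
  rw [← IP (r := r) (a := a) (b := b) (Ss a (-1)) n]
  have h4 : n % 4 = 0 ∨ n % 4 = 1 ∨ n % 4 = 2 ∨ n % 4 = 3 := by omega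
  rcases h4 with h | h | h | h
  · rw [H.caseA (by simp) (by omega) (by rw [sg_0 h]; simp)]
    simp [h]
  · obtain ⟨k, rfl⟩ : ∃ k, n = k + 1 := ⟨n-1, by omega⟩
    rw [H.caseD (by simp) (by omega) (by rw [sg_0 (by omega)]; simp)]
    simp [h]; omega
  · rw [H.caseB (by simp) (by omega) (by rw [sg_2 h]; simp)]
    simp [h]; omega
  · obtain ⟨k, rfl⟩ : ∃ k, n = k + 1 := ⟨n-1, by omega⟩
    rw [H.caseC (by simp) (by omega) (by rw [sg_2 (by omega)]; simp)]
    simp [h]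

lemma Qm (n) : finrank ℂ (PK r a b (Ss a (-1)) (n+1)) + finrank ℂ (PK r a b (Ss a 1) n)
    = finrank ℂ (GG m n) + if n % 4 = 0 ∨ n % 4 = 3 then 1 else 0 := by
  rw [← IP (r := r) (a := a) (b := b) (Ss a 1) n]
  have h4 : n % 4 = 0 ∨ n % 4 = 1 ∨ n % 4 = 2 ∨ n % 4 = 3 := by omega
  rcases h4 with h | h | h | h
  · rw [H.caseB (by simp) (by omega) (by rw [sg_0 h]; simp), neg_neg]
    simp [h]; omega
  · obtain ⟨k, rfl⟩ : ∃ k, n = k + 1 := ⟨n-1, by omega⟩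
    rw [H.caseC (by simp) (by omega) (by rw [sg_0 (by omega)]; simp), neg_neg]
    simp [h]
  · rw [H.caseA (by simp) (by omega) (by rw [sg_2 h]; simp), neg_neg]
    simp [h]
  · obtain ⟨k, rfl⟩ : ∃ k, n = k + 1 := ⟨n-1, by omega⟩
    rw [H.caseD (by simp) (by omega) (by rw [sg_2 (by omega)]; simp), neg_neg]
    simp [h]; omega

lemma Qpm (n) : finrank ℂ (PK r a b (Ss a 1) (n+1)) + (if n % 4 = 0 then 1 else 0)
    = finrank ℂ (PK r a b (Ss a (-1)) (n+1)) + (if n % 4 = 2 then 1 else 0) := by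
  induction n with
  | zero =>
    have h1 := H.Qp 0
    have h2 := H.Qm 0
    rw [PK_zero] at h1 h2
    simp at *
    omega
  | succ n ih =>
    have h1 := H.Qp (n+1)
    have h2 := H.Qm (n+1)
    have h4 : n % 4 = 0 ∨ n % 4 = 1 ∨ n % 4 = 2 ∨ n % 4 = 3 := by omega
    split_ifs at * <;> omega

lemma QQ (n) : finrank ℂ (PK r a b (Ss a 1) (n+1)) + finrank ℂ (PK r a b (Ss a 1) n)
    = finrank ℂ (GG m n) + if n % 4 = 2 ∨ n % 4 = 3 then 1 else 0 := by
  cases n with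
  | zero =>
    have h1 := H.Qp 0
    rw [PK_zero] at *
    simpa using h1
  | succ n =>
    have h1 := H.Qp (n+1)
    have h3 := H.Qpm n
    have h4 : n % 4 = 0 ∨ n % 4 = 1 ∨ n % 4 = 2 ∨ n % 4 = 3 := by omega
    split_ifs at * <;> omega

end Hyp

def JJ : Cochain m →ₗ[ℂ] (Fin m → TT m) where
  toFun f x I := f (I, x)
  map_add' _ _ := rfl
  map_smul' _ _ := rfl

lemma JJ_app (f : Cochain m) (x I) : JJ f x I = f (I, x) := rfl

lemma JJ_inj : Function.Injective (JJ : Cochain m →ₗ[ℂ] (Fin m → TT m)) := by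
  intro f g h
  ext ⟨I, x⟩
  exact congrFun (congrFun h x) I

noncomputable def ee (I : List (Fin m)) : TT m := Pi.single I 1

lemma JJ_single (I : List (Fin m)) (x y : Fin m) :
    JJ (Finsupp.single (I, x) 1) y = if y = x then ee I else 0 := by
  funext K
  rw [JJ_app, Finsupp.single_apply]
  by_cases hy : y = x
  · subst hy
    simp [ee, Pi.single_apply, eq_comm]
  · have : ¬ x = y := fun h => hy h.symm
    simp [hy, this]

lemma ee_nil : (ee [] : TT m) = one := rfl

lemma ee_cons (c : Fin m) (I) : ee (c :: I) = cns c (ee I) := by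
  funext K
  cases K with
  | nil => simp [ee, Pi.single_apply]
  | cons d K =>
    change _ = if d = c then ee I K else 0
    by_cases h : d = c <;> simp [ee, Pi.single_apply, h]

lemma ee_snoc (c : Fin m) (I) : ee (I ++ [c]) = rm c (ee I) := by
  induction I with
  | nil => rw [ee_nil, rm_one, List.nil_append, ee_cons, ee_nil]
  | cons d I ih => rw [List.cons_append, ee_cons, ih, ee_cons, rm_cns]

lemma EE_ee (I : List (Fin m)) : EE r (ee I) = sgn r I • ee I := by
  funext K
  change sgn r K * ee I K = sgn r I * ee I K
  by_cases h : K = I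
  · rw [h]
  · simp [ee, Pi.single_apply, h]

noncomputable def SI (r : ℕ) (a b : Fin m) (I : List (Fin m)) : TT m :=
  ∑ k : Fin I.length, if I.get k = b then
    ((-1 : ℂ) ^ (lpar r (I.take ((k : ℕ) + 1)))) • ee (insertAt I [a, a] k) else 0

namespace Hyp
variable (H : Hyp r a b)
include H

lemma SI_eq (I : List (Fin m)) : sgn r I • SI r a b I = del r a b (ee I) := by
  induction I with
  | nil =>
    rw [ee_nil]
    have : del r a b (one : TT m) = 0 := by
      refine tt_ext rfl fun c => ?_
      rw [cmp_del]; simp [cmp_one]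
    rw [this]
    simp [SI]
  | cons c I ih =>
    have h : SI r a b (c :: I) = (if c = b then ((-1 : ℂ) ^ par r c) • cns a (cns a (ee I)) else 0)
        + ((-1 : ℂ) ^ par r c) • cns c (SI r a b I) := by
      rw [SI, SI]
      simp only [List.length_cons]
      rw [Fin.sum_univ_succ, map_sum, Finset.smul_sum]
      congr 1
      · simp [insertAt, ee_cons, lpar]
      · refine Finset.sum_congr rfl fun k _ => ?_
        have e : insertAt (c :: I) [a, a] ((k.succ : Fin (I.length + 1)) : ℕ)
          = c :: insertAt I [a,a] k := by simp [insertAt]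
        rw [e, ee_cons]
        have e2 : (c :: I).get k.succ = I.get k := rfl
        rw [e2]
        split_ifs
        · rw [map_smul, smul_smul, ← pow_add]
          simp [lpar]
        · simp
    rw [h, ee_cons, del_cns _ H.hab, ← ih, sgn_cons, EE_ee]
    have hs : ((-1 : ℂ) ^ par r c) * ((-1 : ℂ) ^ par r c) = 1 := by
      rw [← mul_pow]; simp
    rw [smul_add, smul_smul, map_smul, mul_right_comm, hs, one_mul, add_comm]
    congr 1
    split_ifs
    · rw [smul_smul, mul_right_comm, hs, one_mul, map_smul, map_smul]
    · simp

lemma JJ_basis (I : List (Fin m)) (x y : Fin m) :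
    JJ (((-1 : ℂ) ^ ppar r (I, x)) • basisComp r (I, x) ([a, a], b)) y
      = if y = x then ((-1 : ℂ) ^ par r x) • del r a b (ee I) else 0 := by
  have h : JJ (basisComp r (I, x) ([a, a], b)) y = if y = x then SI r a b I else 0 := by
    rw [basisComp, map_sum, Finset.sum_apply]
    have hp : ppar r (([a, a], b) : List (Fin m) × Fin m) = 1 := by
      simp [ppar, lpar, H.ha, H.hb]
    rw [hp]
    by_cases hy : y = x
    · rw [if_pos hy, SI]
      refine Finset.sum_congr rfl fun k _ => ?_
      dsimp only
      split_ifs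
      · rw [map_smul, Pi.smul_apply, JJ_single, if_pos hy, mul_one]
      · simp
    · rw [if_neg hy]
      refine Finset.sum_eq_zero fun k _ => ?_
      dsimp only
      split_ifs
      · rw [map_smul, Pi.smul_apply, JJ_single, if_neg hy, smul_zero]
      · simp
  rw [map_smul, Pi.smul_apply, h]
  split_ifs
  · rw [← H.SI_eq, smul_smul, sgn, ppar, pow_add, mul_comm]
  · simp

lemma JJ_basis' (I : List (Fin m)) (x y : Fin m) :
    JJ (basisComp r ([a, a], b) (I, x)) y
      = if y = b then (if x = a then Ss a 1 (ee I) else 0) else 0 := by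
  rw [basisComp, map_sum, Finset.sum_apply]
  have hl : ∀ k, lpar r ([a, a].take k) = 0 := by
    intro k
    rcases k with _ | _ | k <;> simp [lpar, H.ha]
  simp only [hl, zero_mul, pow_zero, one_smul]
  change ∑ k : Fin 2, _ = _
  rw [Fin.sum_univ_two]
  by_cases hx : x = a
  · subst hx
    simp only [List.get, if_true, JJ_single, insertAt]
    by_cases hy : y = b
    · simp [hy, Ss_app, ee_cons, ee_snoc, add_comm]
    · simp [hy]
  · have : ¬ a = x := fun h => hx h.symm
    simp [hx, this]

end Hyp

noncomputable def MM (r : ℕ) (a b : Fin m) : (Fin m → TT m) →ₗ[ℂ] (Fin m → TT m) where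
  toFun F x := (if x = b then Ss a 1 (F a) else 0) - ((-1 : ℂ) ^ par r x) • del r a b (F x)
  map_add' F G := by
    funext x
    by_cases h : x = b
    · simp [h]; abel
    · simp [h]; abel
  map_smul' t F := by
    funext x
    by_cases h : x = b
    · simp [h, smul_sub, smul_comm t]
    · simp [h, smul_comm t]

lemma MM_app (F : Fin m → TT m) (x : Fin m) : MM r a b F x =
    (if x = b then Ss a 1 (F a) else 0) - ((-1 : ℂ) ^ par r x) • del r a b (F x) := rfl

lemma mem_Cn {n} {f : Cochain m} : f ∈ Cn m n ↔ ∀ x, JJ f x ∈ GG m (n+1) := by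
  have : Cn m n = Finsupp.supported ℂ ℂ {p : List (Fin m) × Fin m | p.1.length = n} := by
    rw [Finsupp.supported_eq_span_single, Cn]
    congr 1
    ext f
    simp only [Set.mem_setOf_eq, Set.mem_image, Prod.exists]
    constructor
    · rintro ⟨I, hI, x, rfl⟩
      exact ⟨I, x, hI, rfl⟩
    · rintro ⟨I, x, hI, rfl⟩
      exact ⟨I, hI, x, rfl⟩
  rw [this, Finsupp.mem_supported']
  constructor
  · intro h x I hI
    exact h (I, x) (by simpa using hI)
  · rintro h ⟨I, x⟩ hI
    exact h x I (by simpa using hI)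

lemma JJ_surj {n} {F : Fin m → TT m} (hF : ∀ x, F x ∈ GG m (n+1)) : ∃ f, JJ f = F := by
  refine ⟨Finsupp.ofSupportFinite (fun p => F p.2 p.1) ?_, rfl⟩
  refine Set.Finite.subset ((List.finite_length_eq (Fin m) n).prod (Set.finite_univ (α := Fin m))) ?_
  rintro ⟨I, x⟩ h
  refine ⟨?_, trivial⟩
  by_contra hI
  exact h (hF x I (by simpa using hI))

open Module in
lemma finrank_Cn (n) : finrank ℂ (Cn m n) = m * m ^ n := by
  have e : (Cn m n).map JJ = Submodule.pi Set.univ (fun _ => GG m (n+1)) := by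
    apply le_antisymm
    · rintro _ ⟨f, hf, rfl⟩ x -
      exact mem_Cn.1 hf x
    · intro F hF
      have hF' : ∀ x, F x ∈ GG m (n+1) := fun x => hF x trivial
      obtain ⟨f, rfl⟩ := JJ_surj hF'
      exact ⟨f, mem_Cn.2 hF', rfl⟩
  rw [(Submodule.equivMapOfInjective JJ JJ_inj (Cn m n)).finrank_eq, e, finrank_piS]
  simp [finrank_GG]

instance Cnfin (n) : FiniteDimensional ℂ (Cn m n) := by
  have : FiniteDimensional ℂ ((Cn m n).map JJ) := by
    refine Submodule.finiteDimensional_of_le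
      (S₂ := Submodule.pi Set.univ (fun _ => GG m (n+1))) ?_
    rintro _ ⟨f, hf, rfl⟩ x -
    exact mem_Cn.1 hf x
  exact LinearEquiv.finiteDimensional (Submodule.equivMapOfInjective JJ JJ_inj (Cn m n)).symm

namespace Hyp
variable (H : Hyp r a b)
include H

lemma JJ_D (f : Cochain m) : JJ (Dop r a b f) = MM r a b (JJ f) := by
  have : JJ ∘ₗ Dop r a b = MM r a b ∘ₗ JJ := by
    refine Finsupp.lhom_ext' fun p => LinearMap.ext_ring ?_
    obtain ⟨I, x⟩ := p
    simp only [LinearMap.comp_apply, Finsupp.lsingle_apply]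
    have h1 : Dop r a b (Finsupp.single (I, x) 1) = basisComp r ([a, a], b) (I, x)
        - ((-1 : ℂ) ^ ppar r (I, x)) • basisComp r (I, x) ([a, a], b) := by
      simp [Dop, comp, NilpotentCohomology.dd, twist]
    rw [h1, map_sub]
    funext y
    rw [Pi.sub_apply, H.JJ_basis, H.JJ_basis', MM_app, JJ_single, JJ_single]
    by_cases hy : y = x
    · subst hy
      by_cases hb : y = b
      · subst hb
        have := H.hab
        simp [H.hab, H.hab.symm]
      · simp [hb]
    · by_cases hx : x = a
      · subst hx; simp [hy]
      · have : ¬ a = x := fun h => hx h.symm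
        simp [hy, hx, this]
  exact LinearMap.congr_fun this f

lemma MM_MM (F : Fin m → TT m) : MM r a b (MM r a b F) = 0 := by
  funext x
  rw [MM_app, MM_app, MM_app, if_neg H.hab]
  by_cases hx : x = b
  · subst hx
    simp [H.ha, H.hb, H.del_S, H.dd]
  · simp [hx, H.dd]

lemma GG_MM {n} {F : Fin m → TT m} (hF : ∀ x, F x ∈ GG m n) (x) : MM r a b F x ∈ GG m (n+1) := by
  rw [MM_app]
  refine sub_mem ?_ (Submodule.smul_mem _ _ (GG_del (hF x)))
  split_ifs
  · exact add_mem (GG_cns _ (hF a)) (Submodule.smul_mem _ _ (GG_rm _ (hF a)))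
  · exact zero_mem _

open Module

lemma zeta (n) : finrank ℂ (Zfull r a b n) = (m-1) * finrank ℂ (KK r a b (n+1))
    + finrank ℂ (PK r a b (Ss a 1) (n+1)) := by
  have hP : PK r a b (-(Ss a 1)) (n+1) = PK r a b (Ss a 1) (n+1) := by
    ext u
    rw [mem_PK, mem_PK, LinearMap.neg_apply, neg_mem_iff]
  rw [← hP, ← finrank_Psi _ H.hab,
    (Submodule.equivMapOfInjective JJ JJ_inj (Zfull r a b n)).finrank_eq]
  have key : ∀ F : Fin m → TT m, MM r a b F = 0 ↔ (∀ x, x ≠ b → del r a b (F x) = 0) ∧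
      (-(Ss a 1)) (F a) = del r a b (F b) := by
    intro F
    constructor
    · intro h
      refine ⟨fun x hx => ?_, ?_⟩
      · have := congrFun h x
        rw [MM_app, if_neg hx] at this
        simpa using this
      · have := congrFun h b
        rw [MM_app, if_pos rfl, H.hb] at this
        simp only [pow_one, neg_smul, one_smul, sub_neg_eq_add, Pi.zero_apply] at this
        rw [LinearMap.neg_apply, neg_eq_iff_add_eq_zero, this]
    · rintro ⟨h1, h2⟩
      funext x
      rw [MM_app]
      by_cases hx : x = b
      · subst hx
        rw [if_pos rfl, ← h2, H.hb]
        simp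
      · rw [if_neg hx, h1 x hx]
        simp
  have e : (Zfull r a b n).map JJ = Psi r a b (-(Ss a 1)) a b (n+1) := by
    apply le_antisymm
    · rintro _ ⟨f, ⟨hf, hk⟩, rfl⟩
      refine mem_Psi.2 ⟨mem_Cn.1 hf, (key _).1 ?_⟩
      rw [← H.JJ_D, LinearMap.mem_ker.1 hk, map_zero]
    · intro F hF
      obtain ⟨h1, h2⟩ := mem_Psi.1 hF
      obtain ⟨f, rfl⟩ := JJ_surj h1
      refine ⟨f, ⟨mem_Cn.2 h1, LinearMap.mem_ker.2 (JJ_inj ?_)⟩, rfl⟩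
      rw [H.JJ_D, (key _).2 h2, map_zero]
  rw [e]

lemma B_le_Z (n) : Bfull r a b n ≤ Zfull r a b n := by
  cases n with
  | zero => exact bot_le
  | succ n =>
    rintro _ ⟨f, hf, rfl⟩
    refine ⟨mem_Cn.2 ?_, LinearMap.mem_ker.2 (JJ_inj ?_)⟩
    · rw [H.JJ_D]
      exact H.GG_MM (mem_Cn.1 hf)
    · rw [H.JJ_D, H.JJ_D, H.MM_MM, map_zero]

lemma hdim (n) : finrank ℂ (Hfull r a b n) + finrank ℂ (Bfull r a b n)
    = finrank ℂ (Zfull r a b n) := by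
  have : FiniteDimensional ℂ (Zfull r a b n) :=
    Submodule.finiteDimensional_of_le (inf_le_left : Zfull r a b n ≤ Cn m n)
  rw [← Submodule.finrank_quotient_add_finrank ((Bfull r a b n).comap (Zfull r a b n).subtype),
    ← Submodule.finrank_map_subtype_eq (Zfull r a b n) (Submodule.comap _ _),
    Submodule.map_comap_subtype, inf_eq_right.2 (H.B_le_Z n)]

lemma main (n) : finrank ℂ (Hfull r a b n) = (m-1)^(n+1)
    + if n % 4 = 2 ∨ n % 4 = 3 then 1 else 0 := by
  have h1 := H.hdim n
  have h2 := H.zeta n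
  have h3 := H.QQ n
  have h4 := H.kappa n
  have e : (m-1) * (finrank ℂ (KK r a b (n+1)) + finrank ℂ (KK r a b n))
    = (m-1) * ((m-1)^n + finrank ℂ (GG m n)) := by rw [h4]
  rw [mul_add, mul_add, ← pow_succ'] at e
  cases n with
  | zero =>
    have hB : finrank ℂ (Bfull r a b 0) = 0 := by
      change finrank ℂ (⊥ : Submodule ℂ (Cochain m)) = 0
      exact finrank_bot _ _
    rw [H.kappa0, finrank_GG0] at e
    rw [PK_zero, finrank_GG0] at h3
    simp only [mul_zero] at e
    omega
  | succ n =>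
    have h5 := H.zeta n
    have h6 := rn (Dop r a b) (Cn m n)
    change finrank ℂ (Bfull r a b (n+1)) + finrank ℂ (Zfull r a b n) = _ at h6
    rw [finrank_Cn] at h6
    rw [finrank_GG] at e h3
    have hm : 1 ≤ m := by have := a.2; omega
    have : m * m ^ n = (m-1) * m^n + m^n := by
      obtain ⟨k, rfl⟩ := Nat.exists_eq_add_of_le' hm
      simp; ring
    omega

end Hyp

end Aux

/-- the cohomology of the codifferential `d = ψ^{e₁e₁}_{f_s}` on an
`r|s`-dimensional graded space has `h^n = (r+s−1)^{n+1}` for `n ≡ 0, 1 (mod 4)` and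
`h^n = (r+s−1)^{n+1} + 1` for `n ≡ 2, 3 (mod 4)`. -/
theorem cohomology_dim_e1 (r s : ℕ) (hr : 1 ≤ r) (hs : 1 ≤ s)
    (e1 fs : Fin (r + s)) (he1 : (e1 : ℕ) = 0) (hfs : (fs : ℕ) = r + s - 1) :
    ∀ n : ℕ, Module.finrank ℂ (Hfull r e1 fs n) =
      if n % 4 = 0 ∨ n % 4 = 1 then (r + s - 1) ^ (n + 1) else (r + s - 1) ^ (n + 1) + 1 := by
  intro n
  have H : Hyp r e1 fs := by
    refine ⟨?_, ?_, ?_⟩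
    · intro h
      have := congrArg Fin.val h
      omega
    · simp only [par]
      rw [if_pos (by omega)]
    · simp only [par]
      rw [if_neg (by omega)]
  rw [H.main n]
  split_ifs <;> omega


end NilpotentCohomology
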